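/- arXiv:math/0303250 — 2 statements merged into one kernel-verified Lean document; each statement's English description precedes it below -/
import Mathlib

section
/- For every complex number q with |q| < 1, the following identity of absolutely convergent series holds: Σ_{n=0}^∞ (n/2)·χ₂₀⁽⁰⁾(n)·q^{(n²−9)/40} = −Σ_{n=0}^∞ Σ_{c=0}^n ((q;q)_n − (q;q)_∞)·q^{c²+c}·[n choose c]_q + (q;q)_∞ · Σ_{c=0}^∞ (q^{c²+c}/(q;q)_c)·(3c + Σ_{i=1}^c q^i/(1−q^i)) + (q;q⁵)_∞·(q⁴;q⁵)_∞·(q⁵;q⁵)_∞ · (3/2 − Σ_{i=1}^∞ q^i/(1−q^i)). -/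
/-- The finite q-Pochhammer symbol `(x;q)_n = ∏_{i=1}^n (1 - x q^{i-1})`. -/
noncomputable def qPoch (q x : ℂ) (n : ℕ) : ℂ := ∏ i ∈ Finset.range n, (1 - x * q ^ i)

/-- The infinite q-Pochhammer symbol `(x;q)_∞ = ∏_{i=1}^∞ (1 - x q^{i-1})`. -/
noncomputable def qPochInf (q x : ℂ) : ℂ := ∏' i : ℕ, (1 - x * q ^ i)

/-- The Gaussian binomial coefficient `[n choose c]_q`. -/
noncomputable def qBinom (q : ℂ) (n c : ℕ) : ℂ :=
  if c ≤ n then qPoch q q n / (qPoch q q c * qPoch q q (n - c)) else 0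

/-- The 20-periodic function `χ₂₀⁽⁰⁾`. -/
def chi20_0 (n : ℕ) : ℤ :=
  if n % 20 = 3 ∨ n % 20 = 17 then 1
  else if n % 20 = 7 ∨ n % 20 = 13 then -1
  else 0

/-!
For `|x| < 1` let `H(x) = ∑_n (x;q)_{n+1} x^n P_n(x²q)` with
`P_n(y) = ∑_{c ≤ n} q^{c²} y^c [n choose c]_q`. The two Pascal recurrences for `P_n` make
`H(x) + q⁴x⁵H(xq)` telescope to `1 - x²q`, and iterating this functional equation turns `H` into a
partial theta series, which is entire in `x`. Replacing each `(xq;q)_n` by its limit `(xq;q)_∞`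
splits `H(x)` into `1 - x` times a series that converges for `|x| < 1/|q|` and the series
`∑_c q^{c²+c} x^{3c} (xq^{c+1};q)_∞`, which is again entire. By the identity theorem the partial
theta series and this decomposition agree near `x = 1`. Their values there give the theta product,
by the Jacobi triple product identity, and their derivatives give the theorem.
-/

open Filter Topology

section QPochhammer

variable {q x : ℂ}

lemma qPoch_zero (q x : ℂ) : qPoch q x 0 = 1 := Finset.prod_range_zero _

lemma qPoch_succ (q x : ℂ) (n : ℕ) : qPoch q x (n + 1) = qPoch q x n * (1 - x * q ^ n) :=
  Finset.prod_range_succ _ n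

lemma qPoch_add (q x : ℂ) (m n : ℕ) :
    qPoch q x (m + n) = qPoch q x m * qPoch q (x * q ^ m) n := by
  simp only [qPoch, Finset.prod_range_add, pow_add, mul_assoc]

lemma qPoch_succ' (q x : ℂ) (n : ℕ) : qPoch q x (n + 1) = (1 - x) * qPoch q (x * q) n := by
  rw [add_comm n 1, qPoch_add, qPoch_succ, qPoch_zero, pow_zero, pow_one, mul_one, one_mul]

lemma differentiable_qPoch (q : ℂ) (n : ℕ) : Differentiable ℂ fun x ↦ qPoch q x n := by
  unfold qPoch
  fun_prop

lemma norm_pow_lt_one {𝕜 : Type*} [NormedDivisionRing 𝕜] {a : 𝕜} (ha : ‖a‖ < 1) {n : ℕ}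
    (hn : n ≠ 0) : ‖a ^ n‖ < 1 := by
  rw [norm_pow]
  exact pow_lt_one₀ (norm_nonneg a) ha hn

lemma norm_mul_pow_le (hq : ‖q‖ < 1) (x : ℂ) (n : ℕ) : ‖x * q ^ n‖ ≤ ‖x‖ := by
  rw [norm_mul, norm_pow]
  exact mul_le_of_le_one_right (norm_nonneg x) (pow_le_one₀ (norm_nonneg q) hq.le)

lemma summable_norm_neg_mul_pow (hq : ‖q‖ < 1) (x : ℂ) : Summable fun n : ℕ ↦ ‖-(x * q ^ n)‖ := by
  simpa only [norm_neg, norm_mul, norm_pow] using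
    (summable_geometric_of_lt_one (norm_nonneg q) hq).mul_left ‖x‖

lemma tendsto_qPoch (hq : ‖q‖ < 1) (x : ℂ) : Tendsto (qPoch q x) atTop (𝓝 (qPochInf q x)) := by
  have h := multipliable_one_add_of_summable (summable_norm_neg_mul_pow hq x)
  simpa only [← sub_eq_add_neg] using! h.hasProd.tendsto_prod_nat

lemma qPochInf_eq_qPoch_mul (hq : ‖q‖ < 1) (x : ℂ) (n : ℕ) :
    qPochInf q x = qPoch q x n * qPochInf q (x * q ^ n) := by
  refine tendsto_nhds_unique ((tendsto_qPoch hq x).comp (tendsto_add_atTop_nat n))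
    (((tendsto_qPoch hq (x * q ^ n)).const_mul (qPoch q x n)).congr fun m ↦ ?_)
  rw [Function.comp_apply, add_comm, qPoch_add]

lemma one_sub_mul_pow_ne_zero (hq : ‖q‖ < 1) (hx : ‖x‖ < 1) (n : ℕ) : 1 - x * q ^ n ≠ 0 := by
  refine sub_ne_zero.2 fun h ↦ ?_
  have := (norm_mul_pow_le hq x n).trans_lt hx
  rw [← h, norm_one] at this
  exact this.false

lemma qPoch_ne_zero (hq : ‖q‖ < 1) (hx : ‖x‖ < 1) (n : ℕ) : qPoch q x n ≠ 0 :=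
  Finset.prod_ne_zero_iff.2 fun i _ ↦ one_sub_mul_pow_ne_zero hq hx i

lemma qPochInf_ne_zero (hq : ‖q‖ < 1) (hx : ∀ n : ℕ, 1 - x * q ^ n ≠ 0) : qPochInf q x ≠ 0 := by
  simpa only [← sub_eq_add_neg] using! tprod_one_add_ne_zero_of_summable
    (fun n ↦ by simpa only [← sub_eq_add_neg] using hx n) (summable_norm_neg_mul_pow hq x)

lemma norm_qPoch_le {R : ℝ} (hq : ‖q‖ < 1) (hx : ‖x‖ ≤ R) (n : ℕ) :
    ‖qPoch q x n‖ ≤ Real.exp (R / (1 - ‖q‖)) := by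
  have hfactor (i : ℕ) : ‖1 - x * q ^ i‖ ≤ Real.exp (R * ‖q‖ ^ i) :=
    calc ‖1 - x * q ^ i‖ ≤ ‖(1 : ℂ)‖ + ‖x * q ^ i‖ := norm_sub_le _ _
      _ ≤ R * ‖q‖ ^ i + 1 := by
        rw [norm_one, norm_mul, norm_pow, add_comm]
        gcongr
      _ ≤ Real.exp (R * ‖q‖ ^ i) := Real.add_one_le_exp _
  have hR : 0 ≤ R := (norm_nonneg x).trans hx
  calc ‖qPoch q x n‖ ≤ ∏ i ∈ Finset.range n, ‖1 - x * q ^ i‖ := Finset.norm_prod_le _ _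
    _ ≤ ∏ i ∈ Finset.range n, Real.exp (R * ‖q‖ ^ i) := by
      gcongr with i
      exact hfactor i
    _ = Real.exp (R * ∑ i ∈ Finset.range n, ‖q‖ ^ i) := by rw [← Real.exp_sum, Finset.mul_sum]
    _ ≤ Real.exp (R / (1 - ‖q‖)) := by
      rw [div_eq_mul_inv, ← tsum_geometric_of_lt_one (norm_nonneg q) hq]
      gcongr
      exact (summable_geometric_of_lt_one (norm_nonneg q) hq).sum_le_tsum _ fun i _ ↦ by positivity

lemma norm_qPochInf_le {R : ℝ} (hq : ‖q‖ < 1) (hx : ‖x‖ ≤ R) :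
    ‖qPochInf q x‖ ≤ Real.exp (R / (1 - ‖q‖)) :=
  le_of_tendsto (tendsto_qPoch hq x).norm (Eventually.of_forall (norm_qPoch_le hq hx))

lemma norm_qPoch_sub_qPochInf_le {R : ℝ} (hq : ‖q‖ < 1) (hx : ‖x‖ ≤ R) (n : ℕ) :
    ‖qPoch q x n - qPochInf q x‖ ≤ Real.exp (R / (1 - ‖q‖)) * R * ‖q‖ ^ n / (1 - ‖q‖) := by
  rw [← dist_eq_norm]
  refine dist_le_of_le_geometric_of_tendsto ‖q‖ _ hq (fun m ↦ ?_) (tendsto_qPoch hq x) n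
  rw [dist_eq_norm, qPoch_succ, mul_one_sub, sub_sub_cancel, norm_mul, norm_mul, norm_pow,
    ← mul_assoc]
  gcongr
  exact norm_qPoch_le hq hx m

lemma summable_pow_div_one_sub_mul_pow (hq : ‖q‖ < 1) (x : ℂ) :
    Summable fun n : ℕ ↦ q ^ n / (1 - x * q ^ n) := by
  have hlim : Tendsto (fun n : ℕ ↦ (1 - x * q ^ n)⁻¹) atTop (𝓝 1) := by
    simpa using (((tendsto_pow_atTop_nhds_zero_of_norm_lt_one hq).const_mul x).const_sub 1).inv₀
      (by simp)
  rw [← Nat.cofinite_eq_atTop] at hlim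
  simpa only [div_eq_mul_inv] using
    (summable_geometric_of_norm_lt_one hq).norm.mul_tendsto_const hlim

lemma summable_lambert (hq : ‖q‖ < 1) : Summable fun n : ℕ ↦ q ^ (n + 1) / (1 - q ^ (n + 1)) := by
  simpa only [one_mul] using (summable_nat_add_iff 1).2 (summable_pow_div_one_sub_mul_pow hq 1)

lemma hasProdLocallyUniformlyOn_qPochInf (hq : ‖q‖ < 1) (R : ℝ) :
    HasProdLocallyUniformlyOn (fun (n : ℕ) (x : ℂ) ↦ 1 - x * q ^ n) (qPochInf q)
      (Metric.ball 0 R) := by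
  simp only [sub_eq_add_neg, funext fun x ↦ show qPochInf q x = ∏' n : ℕ, (1 + -(x * q ^ n)) by
    simp only [qPochInf, sub_eq_add_neg]]
  refine Summable.hasProdLocallyUniformlyOn_nat_one_add Metric.isOpen_ball
    ((summable_geometric_of_lt_one (norm_nonneg q) hq).mul_left R)
    (Eventually.of_forall fun n x hx ↦ ?_) fun n ↦ by fun_prop
  rw [norm_neg, norm_mul, norm_pow]
  gcongr
  exact (mem_ball_zero_iff.1 hx).le

lemma differentiable_qPochInf (hq : ‖q‖ < 1) : Differentiable ℂ (qPochInf q) := fun x ↦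
  ((hasProdLocallyUniformlyOn_iff_tendstoLocallyUniformlyOn.1
    (hasProdLocallyUniformlyOn_qPochInf hq (‖x‖ + 1))).differentiableOn
    (Eventually.of_forall fun s ↦ by fun_prop) Metric.isOpen_ball).differentiableAt
    (Metric.isOpen_ball.mem_nhds (by simp))

lemma hasDerivAt_qPochInf (hq : ‖q‖ < 1) (hx : ∀ n : ℕ, 1 - x * q ^ n ≠ 0) :
    HasDerivAt (qPochInf q) (-(qPochInf q x * ∑' n : ℕ, q ^ n / (1 - x * q ^ n))) x := by
  have hfactor (n : ℕ) :
      logDeriv (fun y : ℂ ↦ 1 - y * q ^ n) x = -(q ^ n / (1 - x * q ^ n)) := by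
    have h : HasDerivAt (fun y : ℂ ↦ 1 - y * q ^ n) (-(q ^ n)) x := by
      simpa using ((hasDerivAt_id x).mul_const (q ^ n)).const_sub 1
    rw [logDeriv_apply, h.deriv, neg_div]
  have hlog : logDeriv (qPochInf q) x = ∑' n : ℕ, logDeriv (fun y : ℂ ↦ 1 - y * q ^ n) x :=
    logDeriv_tprod_eq_tsum Metric.isOpen_ball (mem_ball_zero_iff.2 (lt_add_one ‖x‖)) hx
      (fun n ↦ by fun_prop)
      (by simpa only [hfactor] using (summable_pow_div_one_sub_mul_pow hq x).neg)
      (hasProdLocallyUniformlyOn_qPochInf hq _).multipliableLocallyUniformlyOn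
      (qPochInf_ne_zero hq hx)
  rw [logDeriv_apply, div_eq_iff (qPochInf_ne_zero hq hx)] at hlog
  simp only [hfactor, tsum_neg, mul_comm _ (qPochInf q x), mul_neg] at hlog
  rw [← hlog]
  exact (differentiable_qPochInf hq x).hasDerivAt

end QPochhammer

section QBinomial

variable {q x : ℂ}

lemma qBinom_of_lt (q : ℂ) {n c : ℕ} (h : n < c) : qBinom q n c = 0 := if_neg h.not_ge

lemma qBinom_add_left (q : ℂ) (m c : ℕ) :
    qBinom q (c + m) c = qPoch q q (c + m) / (qPoch q q c * qPoch q q m) := by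
  rw [qBinom, if_pos (Nat.le_add_right c m), Nat.add_sub_cancel_left]

lemma qBinom_zero_right (hq : ‖q‖ < 1) (n : ℕ) : qBinom q n 0 = 1 := by
  simp [qBinom, qPoch_zero, qPoch_ne_zero hq hq n]

lemma qBinom_self (hq : ‖q‖ < 1) (n : ℕ) : qBinom q n n = 1 := by
  simp [qBinom, qPoch_zero, qPoch_ne_zero hq hq n]

lemma qBinom_add_symm (q : ℂ) (m n : ℕ) : qBinom q (m + n) m = qBinom q (m + n) n := by
  rw [qBinom_add_left, add_comm m n, qBinom_add_left, mul_comm]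

lemma qBinom_succ_succ (hq : ‖q‖ < 1) (n c : ℕ) :
    qBinom q (n + 1) (c + 1) = qBinom q n c + q ^ (c + 1) * qBinom q n (c + 1) := by
  rcases lt_trichotomy n c with h | rfl | h
  · simp [qBinom_of_lt, h, h.trans (Nat.lt_succ_self c)]
  · simp [qBinom_of_lt, qBinom_self hq]
  · obtain ⟨m, rfl⟩ := Nat.exists_eq_add_of_lt h
    rw [show c + m + 1 + 1 = c + 1 + (m + 1) by ring, qBinom_add_left,
      show c + m + 1 = c + (m + 1) by ring, qBinom_add_left,
      show c + (m + 1) = c + 1 + m by ring, qBinom_add_left, ← add_assoc (c + 1) m 1,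
      qPoch_succ q q (c + 1 + m), qPoch_succ q q m, qPoch_succ q q c]
    have := qPoch_ne_zero hq hq c
    have := qPoch_ne_zero hq hq m
    have := one_sub_mul_pow_ne_zero hq hq c
    have := one_sub_mul_pow_ne_zero hq hq m
    field_simp
    ring

lemma qBinom_add_succ_succ (hq : ‖q‖ < 1) (m c : ℕ) :
    qBinom q (c + m + 1) (c + 1) = qBinom q (c + m) (c + 1) + q ^ m * qBinom q (c + m) c := by
  cases m with
  | zero => simp [qBinom_of_lt, qBinom_self hq]
  | succ m =>
    rw [show c + (m + 1) + 1 = m + 1 + (c + 1) by ring, ← qBinom_add_symm,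
      show m + 1 + (c + 1) = m + c + 1 + 1 by ring, qBinom_succ_succ hq,
      show m + c + 1 = m + (c + 1) by ring, qBinom_add_symm,
      show m + (c + 1) = m + 1 + c by ring, qBinom_add_symm, add_comm (m + 1) c]

lemma sum_succ_mul_qBinom (hq : ‖q‖ < 1) (f : ℕ → ℂ) (n : ℕ) :
    ∑ c ∈ Finset.range (n + 1), f (c + 1) * qBinom q n (c + 1)
      = ∑ c ∈ Finset.range (n + 1), f c * qBinom q n c - f 0 := by
  rw [eq_sub_iff_add_eq, Finset.sum_range_succ _ n, Finset.sum_range_succ' _ n,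
    qBinom_of_lt q n.lt_succ_self, qBinom_zero_right hq, mul_zero, mul_one, add_zero]

lemma sum_mul_qBinom_succ (hq : ‖q‖ < 1) (f : ℕ → ℂ) (n : ℕ) :
    ∑ c ∈ Finset.range (n + 2), f c * qBinom q (n + 1) c
      = ∑ c ∈ Finset.range (n + 1), (q ^ c * f c + f (c + 1)) * qBinom q n c := by
  have hshift := sum_succ_mul_qBinom hq (fun c ↦ q ^ c * f c) n
  rw [Finset.sum_range_succ', qBinom_zero_right hq]
  simp only [qBinom_succ_succ hq, mul_add, add_mul, Finset.sum_add_distrib, pow_zero, one_mul,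
    ← mul_assoc, mul_comm (f _) (q ^ _)] at hshift ⊢
  linear_combination hshift

lemma sum_mul_qBinom_succ' (hq : ‖q‖ < 1) (f : ℕ → ℂ) (n : ℕ) :
    ∑ c ∈ Finset.range (n + 2), f c * qBinom q (n + 1) c
      = ∑ c ∈ Finset.range (n + 1), (f c + q ^ (n - c) * f (c + 1)) * qBinom q n c := by
  have hpascal (c : ℕ) (hc : c ∈ Finset.range (n + 1)) : f (c + 1) * qBinom q (n + 1) (c + 1)
      = f (c + 1) * qBinom q n (c + 1) + q ^ (n - c) * f (c + 1) * qBinom q n c := by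
    obtain ⟨m, rfl⟩ := Nat.exists_eq_add_of_le (Nat.lt_succ_iff.1 (Finset.mem_range.1 hc))
    rw [qBinom_add_succ_succ hq, Nat.add_sub_cancel_left]
    ring
  rw [Finset.sum_range_succ', Finset.sum_congr rfl hpascal, qBinom_zero_right hq]
  simp only [add_mul, Finset.sum_add_distrib, sum_succ_mul_qBinom hq]
  ring

lemma exists_norm_qBinom_le (hq : ‖q‖ < 1) : ∃ C : ℝ, ∀ n c, ‖qBinom q n c‖ ≤ C := by
  have hinv := ((tendsto_qPoch hq q).inv₀
    (qPochInf_ne_zero hq (one_sub_mul_pow_ne_zero hq hq))).norm.bddAbove_range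
  obtain ⟨C, hC⟩ := hinv
  replace hC (n : ℕ) : ‖(qPoch q q n)⁻¹‖ ≤ C := hC ⟨n, rfl⟩
  have hC0 : 0 ≤ C := (norm_nonneg _).trans (hC 0)
  refine ⟨Real.exp (1 / (1 - ‖q‖)) * (C * C), fun n c ↦ ?_⟩
  unfold qBinom
  split_ifs
  · rw [div_eq_mul_inv, mul_inv, norm_mul, norm_mul]
    gcongr
    exacts [norm_qPoch_le hq hq.le n, hC c, hC (n - c)]
  · rw [norm_zero]
    positivity

lemma summable_pow_mul_qBinom (hq : ‖q‖ < 1) (hx : ‖x‖ < 1) (c : ℕ) :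
    Summable fun n ↦ x ^ n * qBinom q n c := by
  obtain ⟨C, hC⟩ := exists_norm_qBinom_le hq
  refine ((summable_geometric_of_lt_one (norm_nonneg x) hx).mul_right C).of_norm_bounded
    fun n ↦ ?_
  rw [norm_mul, norm_pow]
  gcongr
  exact hC n c

lemma tsum_pow_mul_qBinom (hq : ‖q‖ < 1) (hx : ‖x‖ < 1) (c : ℕ) :
    ∑' n, x ^ n * qBinom q n c = x ^ c / qPoch q x (c + 1) := by
  induction c with
  | zero =>
    simp [qBinom_zero_right hq, qPoch_succ, qPoch_zero, tsum_geometric_of_norm_lt_one hx]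
  | succ c ih =>
    set S := ∑' n, x ^ n * qBinom q n (c + 1) with hS
    have hrec : S = x * (x ^ c / qPoch q x (c + 1)) + x * q ^ (c + 1) * S := by
      rw [hS, ← ih, ← tsum_mul_left, ← tsum_mul_left,
        ← ((summable_pow_mul_qBinom hq hx c).mul_left x).tsum_add
          ((summable_pow_mul_qBinom hq hx (c + 1)).mul_left (x * q ^ (c + 1))),
        (summable_pow_mul_qBinom hq hx (c + 1)).tsum_eq_zero_add,
        qBinom_of_lt q c.succ_pos, mul_zero, zero_add]
      exact tsum_congr fun n ↦ by rw [qBinom_succ_succ hq]; ring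
    have hP := qPoch_ne_zero hq hx (c + 1)
    have hfactor := one_sub_mul_pow_ne_zero hq hx (c + 1)
    rw [qPoch_succ, eq_div_iff (mul_ne_zero hP hfactor)]
    field_simp at hrec
    linear_combination hrec

end QBinomial

section JacobiTripleProduct

lemma choose_two_succ (k : ℕ) : (k + 1).choose 2 = k.choose 2 + k := by
  rw [Nat.choose_succ_succ' k 1, Nat.choose_one_right, add_comm]

lemma summable_pow_choose_two_mul_pow {𝕜 : Type*} [NormedField 𝕜] [CompleteSpace 𝕜] {q : 𝕜}
    (hq : ‖q‖ < 1) (x : 𝕜) : Summable fun k : ℕ ↦ q ^ k.choose 2 * x ^ k := by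
  have hratio : Tendsto (fun k : ℕ ↦ ‖q‖ ^ k * ‖x‖) atTop (𝓝 0) := by
    simpa using (tendsto_pow_atTop_nhds_zero_of_lt_one (norm_nonneg q) hq).mul_const ‖x‖
  refine summable_of_ratio_norm_eventually_le (r := 1 / 2) (by norm_num) ?_
  filter_upwards [hratio.eventually_le_const one_half_pos] with k hk
  calc ‖q ^ (k + 1).choose 2 * x ^ (k + 1)‖
      = ‖q‖ ^ k * ‖x‖ * ‖q ^ k.choose 2 * x ^ k‖ := by
        simp only [choose_two_succ, norm_mul, norm_pow]
        ring
    _ ≤ 1 / 2 * ‖q ^ k.choose 2 * x ^ k‖ := by gcongr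

lemma sq_eq_two_mul_choose_two_add (k : ℕ) : k ^ 2 = 2 * k.choose 2 + k := by
  induction k with
  | zero => rfl
  | succ k ih =>
    rw [choose_two_succ]
    linear_combination ih

lemma summable_pow_sq_mul_pow {𝕜 : Type*} [NormedField 𝕜] [CompleteSpace 𝕜] {q : 𝕜}
    (hq : ‖q‖ < 1) (x : 𝕜) : Summable fun k : ℕ ↦ q ^ k ^ 2 * x ^ k := by
  refine (summable_pow_choose_two_mul_pow (norm_pow_lt_one hq two_ne_zero) (q * x)).congr fun k ↦ ?_
  rw [sq_eq_two_mul_choose_two_add]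
  ring

variable {q a b : ℂ}

lemma qPoch_neg_eq_sum (hq : ‖q‖ < 1) (x : ℂ) (n : ℕ) :
    qPoch q (-x) n = ∑ j ∈ Finset.range (n + 1), q ^ j.choose 2 * x ^ j * qBinom q n j := by
  induction n with
  | zero => simp [qPoch_zero, qBinom_self hq]
  | succ n ih =>
    rw [qPoch_succ, ih, sum_mul_qBinom_succ' hq, Finset.sum_mul]
    refine Finset.sum_congr rfl fun j hj ↦ ?_
    obtain ⟨m, rfl⟩ := Nat.exists_eq_add_of_le (Nat.lt_succ_iff.1 (Finset.mem_range.1 hj))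
    rw [Nat.add_sub_cancel_left, choose_two_succ]
    ring

lemma sum_pow_mul_qBinom_succ_left (h : ‖a * b‖ < 1) (M N : ℕ) :
    ∑ k ∈ Finset.range (M + 2),
        (a * b) ^ k.choose 2 * a ^ k * qBinom (a * b) (M + 1 + N) (N + k)
      = (1 + a * (a * b) ^ M) * ∑ k ∈ Finset.range (M + 1),
          (a * b) ^ k.choose 2 * a ^ k * qBinom (a * b) (M + N) (N + k)
        + (qBinom (a * b) (M + 1 + N) N - qBinom (a * b) (M + N) N) := by
  have hlow : ∑ k ∈ Finset.range (M + 1),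
        (a * b) ^ (k + 1).choose 2 * a ^ (k + 1) * qBinom (a * b) (M + N) (N + k + 1)
      = ∑ k ∈ Finset.range (M + 1), (a * b) ^ k.choose 2 * a ^ k * qBinom (a * b) (M + N) (N + k)
        - qBinom (a * b) (M + N) N := by
    rw [eq_sub_iff_add_eq, Finset.sum_range_succ _ M, Finset.sum_range_succ' _ M,
      qBinom_of_lt _ (by lia : M + N < N + M + 1)]
    simp [add_assoc]
  have hhigh : ∑ k ∈ Finset.range (M + 1), (a * b) ^ (k + 1).choose 2 * a ^ (k + 1)
        * (qBinom (a * b) (M + 1 + N) (N + k + 1) - qBinom (a * b) (M + N) (N + k + 1))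
      = a * (a * b) ^ M * ∑ k ∈ Finset.range (M + 1),
          (a * b) ^ k.choose 2 * a ^ k * qBinom (a * b) (M + N) (N + k) := by
    rw [Finset.mul_sum]
    refine Finset.sum_congr rfl fun k hk ↦ ?_
    obtain ⟨m, rfl⟩ := Nat.exists_eq_add_of_le (Nat.lt_succ_iff.1 (Finset.mem_range.1 hk))
    rw [show k + m + 1 + N = N + k + m + 1 by ring, show k + m + N = N + k + m by ring,
      qBinom_add_succ_succ h, choose_two_succ]
    ring
  simp only [mul_sub, Finset.sum_sub_distrib, hlow] at hhigh
  rw [Finset.sum_range_succ', Nat.choose_zero_succ]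
  simp only [← add_assoc, add_zero]
  linear_combination hhigh

lemma sum_pow_mul_qBinom_succ_right (h : ‖a * b‖ < 1) (M N : ℕ) :
    ∑ k ∈ Finset.range N,
        (a * b) ^ (k + 1).choose 2 * b ^ (k + 1) * qBinom (a * b) (M + 1 + N) (M + 1 + k + 1)
      = (1 + a * (a * b) ^ M) * ∑ k ∈ Finset.range N,
          (a * b) ^ (k + 1).choose 2 * b ^ (k + 1) * qBinom (a * b) (M + N) (M + k + 1)
        - (a * b) ^ (M + 1) * qBinom (a * b) (M + N) (M + 1) := by
  have hshift : ∑ k ∈ Finset.range N,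
        (a * b) ^ (k + 2).choose 2 * b ^ (k + 2) * qBinom (a * b) (M + N) (M + k + 2)
      = ∑ k ∈ Finset.range N,
          (a * b) ^ (k + 1).choose 2 * b ^ (k + 1) * qBinom (a * b) (M + N) (M + k + 1)
        - b * qBinom (a * b) (M + N) (M + 1) := by
    have hlast := Finset.sum_range_succ (fun k ↦
      (a * b) ^ (k + 1).choose 2 * b ^ (k + 1) * qBinom (a * b) (M + N) (M + k + 1)) N
    rw [Finset.sum_range_succ', qBinom_of_lt _ (by lia : M + N < M + N + 1)] at hlast
    simp only [← add_assoc, zero_add, add_zero, Nat.choose_succ_self, pow_zero, pow_one, one_mul,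
      mul_zero] at hlast
    linear_combination hlast
  have hterm (k : ℕ) :
      (a * b) ^ (k + 1).choose 2 * b ^ (k + 1) * qBinom (a * b) (M + 1 + N) (M + 1 + k + 1)
      = (a * b) ^ (k + 1).choose 2 * b ^ (k + 1) * qBinom (a * b) (M + N) (M + k + 1)
        + a * (a * b) ^ M *
          ((a * b) ^ (k + 2).choose 2 * b ^ (k + 2) * qBinom (a * b) (M + N) (M + k + 2)) := by
    rw [add_right_comm M 1 N, add_right_comm M 1 k, qBinom_succ_succ h, choose_two_succ (k + 1)]
    ring
  rw [Finset.sum_congr rfl fun k _ ↦ hterm k, Finset.sum_add_distrib, ← Finset.mul_sum, hshift]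
  ring

lemma qPoch_neg_mul_qPoch_neg (h : ‖a * b‖ < 1) (M N : ℕ) :
    qPoch (a * b) (-a) M * qPoch (a * b) (-b) N
      = ∑ k ∈ Finset.range (M + 1), (a * b) ^ k.choose 2 * a ^ k * qBinom (a * b) (M + N) (N + k)
        + ∑ k ∈ Finset.range N,
          (a * b) ^ (k + 1).choose 2 * b ^ (k + 1) * qBinom (a * b) (M + N) (M + k + 1) := by
  induction M with
  | zero =>
    rw [qPoch_zero, one_mul, qPoch_neg_eq_sum h, Finset.sum_range_succ', add_comm]
    simp [qBinom_self h, qBinom_zero_right h]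
  | succ M ih =>
    have hpascal : qBinom (a * b) (M + 1 + N) N - qBinom (a * b) (M + N) N
        = (a * b) ^ (M + 1) * qBinom (a * b) (M + N) (M + 1) := by
      rw [← qBinom_add_symm, ← qBinom_add_symm, add_right_comm, qBinom_succ_succ h,
        add_sub_cancel_left]
    rw [qPoch_succ, mul_right_comm, ih, sum_pow_mul_qBinom_succ_left h,
      sum_pow_mul_qBinom_succ_right h, hpascal]
    ring

lemma tendsto_qBinom_add_self (hq : ‖q‖ < 1) (r : ℕ) :
    Tendsto (fun N ↦ qBinom q (N + N) (N + r)) atTop (𝓝 (qPochInf q q)⁻¹) := by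
  have hP := tendsto_qPoch hq q
  have hne := qPochInf_ne_zero hq (one_sub_mul_pow_ne_zero hq hq)
  have hquot := (hP.comp (tendsto_id.atTop_add_atTop tendsto_id)).div
    ((hP.comp (tendsto_add_atTop_nat r)).mul (hP.comp (tendsto_sub_atTop_nat r)))
    (mul_ne_zero hne hne)
  rw [div_mul_cancel_left₀ hne] at hquot
  refine hquot.congr' ?_
  filter_upwards [eventually_ge_atTop r] with N hN
  simp only [Pi.div_apply, Function.comp_apply, id]
  rw [qBinom, if_pos (by lia), Nat.add_sub_add_left]

lemma tendsto_tsum_mul_qBinom (hq : ‖q‖ < 1) {u : ℕ → ℂ} (hu : Summable u) (r : ℕ) :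
    Tendsto (fun N ↦ ∑' k, u k * qBinom q (N + N) (N + (k + r))) atTop
      (𝓝 ((∑' k, u k) * (qPochInf q q)⁻¹)) := by
  obtain ⟨C, hC⟩ := exists_norm_qBinom_le hq
  rw [← tsum_mul_right]
  refine tendsto_tsum_of_dominated_convergence (hu.norm.mul_right C)
    (fun k ↦ (tendsto_qBinom_add_self hq (k + r)).const_mul (u k))
    (Eventually.of_forall fun N k ↦ ?_)
  rw [norm_mul]
  gcongr
  exact hC _ _

theorem jacobi_triple_product (h : ‖a * b‖ < 1) :
    ∑' k : ℕ, (a * b) ^ k.choose 2 * a ^ k + ∑' k : ℕ, (a * b) ^ (k + 1).choose 2 * b ^ (k + 1)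
      = qPochInf (a * b) (-a) * qPochInf (a * b) (-b) * qPochInf (a * b) (a * b) := by
  have hne := qPochInf_ne_zero h (one_sub_mul_pow_ne_zero h h)
  have hpos := tendsto_tsum_mul_qBinom h (summable_pow_choose_two_mul_pow h a) 0
  have hneg := tendsto_tsum_mul_qBinom h
    ((summable_nat_add_iff 1).2 (summable_pow_choose_two_mul_pow h b)) 1
  have hfinite (N : ℕ) : qPoch (a * b) (-a) N * qPoch (a * b) (-b) N
      = ∑' k : ℕ, (a * b) ^ k.choose 2 * a ^ k * qBinom (a * b) (N + N) (N + (k + 0))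
        + ∑' k : ℕ, (a * b) ^ (k + 1).choose 2 * b ^ (k + 1)
          * qBinom (a * b) (N + N) (N + (k + 1)) := by
    rw [qPoch_neg_mul_qPoch_neg h, tsum_eq_sum (s := Finset.range (N + 1)) fun k hk ↦ ?tail,
      tsum_eq_sum (s := Finset.range N) fun k hk ↦ ?tail']
    · rfl
    all_goals
      rw [Finset.mem_range] at hk
      rw [qBinom_of_lt _ (by lia), mul_zero]
  have hlim := tendsto_nhds_unique ((hpos.add hneg).congr fun N ↦ (hfinite N).symm)
    ((tendsto_qPoch h (-a)).mul (tendsto_qPoch h (-b)))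
  rw [← hlim, ← add_mul, inv_mul_cancel_right₀ hne]

end JacobiTripleProduct

section RogersRamanujanPolynomial

/-- The finite Rogers–Ramanujan sum `∑_{c ≤ n} q^{c²} y^c [n choose c]_q`; the double series of the
theorem contains its values at `y = q`, and the deformation used in the proof those at
`y = x² q`. -/
noncomputable def rogersRamanujanPoly (q : ℂ) (n : ℕ) (y : ℂ) : ℂ :=
  ∑ c ∈ Finset.range (n + 1), q ^ c ^ 2 * y ^ c * qBinom q n c

variable {q : ℂ}

lemma rogersRamanujanPoly_zero (hq : ‖q‖ < 1) (y : ℂ) : rogersRamanujanPoly q 0 y = 1 := by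
  simp [rogersRamanujanPoly, qBinom_self hq]

lemma rogersRamanujanPoly_succ (hq : ‖q‖ < 1) (n : ℕ) (y : ℂ) :
    rogersRamanujanPoly q (n + 1) y
      = rogersRamanujanPoly q n (y * q) + y * q * rogersRamanujanPoly q n (y * q ^ 2) := by
  simp only [rogersRamanujanPoly, sum_mul_qBinom_succ hq, Finset.mul_sum,
    ← Finset.sum_add_distrib]
  exact Finset.sum_congr rfl fun c _ ↦ by ring

lemma rogersRamanujanPoly_succ' (hq : ‖q‖ < 1) (n : ℕ) (y : ℂ) :
    rogersRamanujanPoly q (n + 1) y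
      = rogersRamanujanPoly q n y + y * q ^ (n + 1) * rogersRamanujanPoly q n (y * q) := by
  simp only [rogersRamanujanPoly, sum_mul_qBinom_succ' hq, Finset.mul_sum,
    ← Finset.sum_add_distrib]
  refine Finset.sum_congr rfl fun c hc ↦ ?_
  obtain ⟨m, rfl⟩ := Nat.exists_eq_add_of_le (Nat.lt_succ_iff.1 (Finset.mem_range.1 hc))
  rw [Nat.add_sub_cancel_left]
  ring

@[fun_prop]
lemma differentiable_rogersRamanujanPoly (q : ℂ) (n : ℕ) :
    Differentiable ℂ (rogersRamanujanPoly q n) := by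
  unfold rogersRamanujanPoly
  fun_prop

lemma exists_norm_rogersRamanujanPoly_le (hq : ‖q‖ < 1) (R : ℝ) :
    ∃ C : ℝ, ∀ n y, ‖y‖ ≤ R → ‖rogersRamanujanPoly q n y‖ ≤ C := by
  obtain ⟨C, hC⟩ := exists_norm_qBinom_le hq
  have hC0 : 0 ≤ C := (norm_nonneg _).trans (hC 0 0)
  have hsum := summable_pow_sq_mul_pow (by rwa [norm_norm] : ‖‖q‖‖ < 1) R
  refine ⟨(∑' c : ℕ, ‖q‖ ^ c ^ 2 * R ^ c) * C, fun n y hy ↦ ?_⟩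
  have hR : 0 ≤ R := (norm_nonneg y).trans hy
  calc ‖rogersRamanujanPoly q n y‖
      ≤ ∑ c ∈ Finset.range (n + 1), ‖q‖ ^ c ^ 2 * R ^ c * C := by
        refine norm_sum_le_of_le _ fun c _ ↦ ?_
        rw [norm_mul, norm_mul, norm_pow, norm_pow]
        gcongr
        exact hC n c
    _ ≤ (∑' c : ℕ, ‖q‖ ^ c ^ 2 * R ^ c) * C := by
        rw [← Finset.sum_mul]
        gcongr
        exact hsum.sum_le_tsum _ fun c _ ↦ by positivity

end RogersRamanujanPolynomial

section Deformation

variable {q x : ℂ}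

/-- The general term `(x;q)_{n+1} x^n ∑_{c ≤ n} q^{c²+c} x^{2c} [n choose c]_q` of the deformation
`H(x)` of the double series. -/
noncomputable def deformedTerm (q : ℂ) (n : ℕ) (x : ℂ) : ℂ :=
  qPoch q x (n + 1) * x ^ n * rogersRamanujanPoly q n (x ^ 2 * q)

/-- The function of `n` whose differences produce the functional equation of `H(x)`. -/
noncomputable def telescoper (q : ℂ) (n : ℕ) (x : ℂ) : ℂ :=
  qPoch q (x * q) n * x ^ n * (x ^ 2 * q ^ (n + 1) - 1) * rogersRamanujanPoly q n (x ^ 2 * q)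

/-- The general term `(-1)^k q^{(5k²+3k)/2} x^{5k} (1 - x² q^{2k+1})` of the partial theta function
obtained by iterating the functional equation of `H(x)`. The exponent is written
`5 * k.choose 2 + 4 * k` to avoid division. -/
noncomputable def thetaTerm (q : ℂ) (k : ℕ) (x : ℂ) : ℂ :=
  (-1) ^ k * q ^ (5 * k.choose 2 + 4 * k) * x ^ (5 * k) * (1 - x ^ 2 * q ^ (2 * k + 1))

lemma deformedTerm_add_eq_telescoper_sub (hq : ‖q‖ < 1) (n : ℕ) (x : ℂ) :
    deformedTerm q n x + q ^ 4 * x ^ 5 * deformedTerm q n (x * q)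
      = telescoper q (n + 1) x - telescoper q n x := by
  have hrec := rogersRamanujanPoly_succ hq n (x ^ 2 * q)
  have hrec' := rogersRamanujanPoly_succ' hq n (x ^ 2 * q)
  rw [show x ^ 2 * q * q ^ 2 = (x * q) ^ 2 * q by ring] at hrec
  rw [deformedTerm, deformedTerm, telescoper, telescoper, qPoch_succ' q x, qPoch_succ q (x * q)]
  linear_combination qPoch q (x * q) n * x ^ n * (1 - x * q ^ (n + 1)) *
    (x * hrec' - x ^ 3 * q ^ (n + 2) * hrec)

lemma norm_sq_mul_le (hq : ‖q‖ < 1) (hx : ‖x‖ ≤ 1) : ‖x ^ 2 * q‖ ≤ 1 := by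
  rw [norm_mul, norm_pow]
  exact mul_le_one₀ (pow_le_one₀ (norm_nonneg x) hx) (norm_nonneg q) hq.le

lemma exists_norm_deformedTerm_le (hq : ‖q‖ < 1) :
    ∃ C : ℝ, ∀ n x, ‖x‖ ≤ 1 → ‖deformedTerm q n x‖ ≤ C * ‖x‖ ^ n := by
  obtain ⟨C, hC⟩ := exists_norm_rogersRamanujanPoly_le hq 1
  refine ⟨Real.exp (1 / (1 - ‖q‖)) * C, fun n x hx ↦ ?_⟩
  rw [deformedTerm, norm_mul, norm_mul, norm_pow, mul_right_comm]
  gcongr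
  exacts [norm_qPoch_le hq hx _, hC n _ (norm_sq_mul_le hq hx)]

lemma summable_deformedTerm (hq : ‖q‖ < 1) (hx : ‖x‖ < 1) :
    Summable fun n ↦ deformedTerm q n x := by
  obtain ⟨C, hC⟩ := exists_norm_deformedTerm_le hq
  exact ((summable_geometric_of_lt_one (norm_nonneg x) hx).mul_left C).of_norm_bounded
    fun n ↦ hC n x hx.le

lemma tendsto_telescoper (hq : ‖q‖ < 1) (hx : ‖x‖ < 1) :
    Tendsto (fun n ↦ telescoper q n x) atTop (𝓝 0) := by
  obtain ⟨C, hC⟩ := exists_norm_rogersRamanujanPoly_le hq 1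
  have hxq : ‖x * q‖ ≤ 1 := by
    simpa only [pow_one] using (norm_mul_pow_le hq x 1).trans hx.le
  have hfactor : Tendsto (fun n : ℕ ↦ x ^ n * (x ^ 2 * q ^ (n + 1) - 1)) atTop (𝓝 0) := by
    simpa using (tendsto_pow_atTop_nhds_zero_of_norm_lt_one hx).mul
      ((((tendsto_pow_atTop_nhds_zero_of_norm_lt_one hq).comp
        (tendsto_add_atTop_nat 1)).const_mul (x ^ 2)).sub_const 1)
  have hbound (n : ℕ) : ‖qPoch q (x * q) n * rogersRamanujanPoly q n (x ^ 2 * q)‖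
      ≤ Real.exp (1 / (1 - ‖q‖)) * C := by
    rw [norm_mul]
    gcongr
    exacts [norm_qPoch_le hq hxq n, hC n _ (norm_sq_mul_le hq hx.le)]
  refine (hfactor.zero_mul_isBoundedUnder_le (isBoundedUnder_of ⟨_, hbound⟩)).congr fun n ↦ ?_
  rw [telescoper]
  ring

lemma tsum_deformedTerm_eq (hq : ‖q‖ < 1) (hx : ‖x‖ < 1) :
    ∑' n, deformedTerm q n x
      = 1 - x ^ 2 * q - q ^ 4 * x ^ 5 * ∑' n, deformedTerm q n (x * q) := by
  have hxq : ‖x * q‖ < 1 := by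
    simpa only [pow_one] using (norm_mul_pow_le hq x 1).trans_lt hx
  have hsum := ((summable_deformedTerm hq hx).hasSum.add
    ((summable_deformedTerm hq hxq).hasSum.mul_left (q ^ 4 * x ^ 5))).tendsto_sum_nat
  simp only [deformedTerm_add_eq_telescoper_sub hq,
    Finset.sum_range_sub (fun n ↦ telescoper q n x)] at hsum
  have hlim := tendsto_nhds_unique hsum ((tendsto_telescoper hq hx).sub_const (telescoper q 0 x))
  have hzero : telescoper q 0 x = x ^ 2 * q - 1 := by
    simp [telescoper, qPoch_zero, rogersRamanujanPoly_zero hq]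
  linear_combination hlim - hzero

lemma tsum_deformedTerm_eq_sum_thetaTerm (hq : ‖q‖ < 1) (hx : ‖x‖ < 1) (K : ℕ) :
    ∑' n, deformedTerm q n x = ∑ k ∈ Finset.range K, thetaTerm q k x
      + (-1) ^ K * q ^ (5 * K.choose 2 + 4 * K) * x ^ (5 * K)
        * ∑' n, deformedTerm q n (x * q ^ K) := by
  induction K with
  | zero => simp
  | succ K ih =>
    rw [ih, Finset.sum_range_succ, tsum_deformedTerm_eq hq ((norm_mul_pow_le hq x K).trans_lt hx),
      thetaTerm, choose_two_succ, mul_assoc x, ← pow_succ]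
    ring

lemma tendsto_sum_thetaTerm (hq : ‖q‖ < 1) (hx : ‖x‖ < 1) :
    Tendsto (fun K ↦ ∑ k ∈ Finset.range K, thetaTerm q k x) atTop
      (𝓝 (∑' n, deformedTerm q n x)) := by
  obtain ⟨C, hC⟩ := exists_norm_deformedTerm_le hq
  have hbound (K : ℕ) : ‖∑' n, deformedTerm q n (x * q ^ K)‖ ≤ |C| * (1 - ‖x‖)⁻¹ := by
    have hK := norm_mul_pow_le hq x K
    refine tsum_of_norm_bounded
      ((hasSum_geometric_of_lt_one (norm_nonneg x) hx).mul_left |C|) fun n ↦ ?_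
    exact (hC n _ (hK.trans hx.le)).trans (by gcongr; exact le_abs_self C)
  have hrem := (summable_pow_choose_two_mul_pow (norm_pow_lt_one hq (n := 5) (by norm_num))
    (-(q ^ 4 * x ^ 5))).tendsto_atTop_zero.zero_mul_isBoundedUnder_le
      (isBoundedUnder_of ⟨_, hbound⟩)
  refine (sub_zero (∑' n, deformedTerm q n x) ▸ hrem.const_sub _).congr fun K ↦ ?_
  rw [tsum_deformedTerm_eq_sum_thetaTerm hq hx K]
  ring

lemma thetaTerm_one (q : ℂ) (k : ℕ) :
    thetaTerm q k 1 = (q ^ 5) ^ k.choose 2 * (-q ^ 4) ^ k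
      + (q ^ 5) ^ (k + 1).choose 2 * (-q) ^ (k + 1) := by
  rw [thetaTerm, choose_two_succ]
  ring

lemma tsum_thetaTerm_one (hq : ‖q‖ < 1) :
    ∑' k, thetaTerm q k 1
      = qPochInf (q ^ 5) q * qPochInf (q ^ 5) (q ^ 4) * qPochInf (q ^ 5) (q ^ 5) := by
  have hab : -q ^ 4 * -q = q ^ 5 := by ring
  have hq5 : ‖q ^ 5‖ < 1 := norm_pow_lt_one hq (by norm_num)
  have hjacobi := jacobi_triple_product (hab ▸ hq5)
  rw [hab, neg_neg, neg_neg] at hjacobi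
  simp only [thetaTerm_one]
  rw [(summable_pow_choose_two_mul_pow hq5 _).tsum_add
    ((summable_nat_add_iff 1).2 (summable_pow_choose_two_mul_pow hq5 _)), hjacobi,
    mul_comm (qPochInf (q ^ 5) (q ^ 4))]

end Deformation

section Continuation

/-- The general term `((xq;q)_n - (xq;q)_∞) x^n ∑_{c ≤ n} q^{c²+c} x^{2c} [n choose c]_q` of the
part of `H(x) / (1 - x)` that converges beyond the unit disc. -/
noncomputable def tailTerm (q : ℂ) (n : ℕ) (x : ℂ) : ℂ :=
  (qPoch q (x * q) n - qPochInf q (x * q)) * x ^ n * rogersRamanujanPoly q n (x ^ 2 * q)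

/-- The general term `q^{c²+c} x^{3c} (x q^{c+1};q)_∞` of the rest of `H(x)`, the part in which each
`(xq;q)_n` is replaced by its limit `(xq;q)_∞`. -/
noncomputable def limitTerm (q : ℂ) (c : ℕ) (x : ℂ) : ℂ :=
  q ^ (c ^ 2 + c) * x ^ (3 * c) * qPochInf q (x * q ^ (c + 1))

variable {q x : ℂ} {R : ℝ}

lemma differentiable_thetaTerm (q : ℂ) (k : ℕ) : Differentiable ℂ (thetaTerm q k) := by
  unfold thetaTerm
  fun_prop

lemma differentiable_tailTerm (hq : ‖q‖ < 1) (n : ℕ) : Differentiable ℂ (tailTerm q n) := by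
  have hfin := differentiable_qPoch q n
  have hinf := differentiable_qPochInf hq
  unfold tailTerm
  fun_prop

lemma differentiable_limitTerm (hq : ‖q‖ < 1) (c : ℕ) : Differentiable ℂ (limitTerm q c) := by
  have hinf := differentiable_qPochInf hq
  unfold limitTerm
  fun_prop

lemma exists_summable_norm_thetaTerm_le (hq : ‖q‖ < 1) (R : ℝ) :
    ∃ u : ℕ → ℝ, Summable u ∧ ∀ k x, x ∈ Metric.ball (0 : ℂ) R → ‖thetaTerm q k x‖ ≤ u k := by
  have hsum := summable_pow_choose_two_mul_pow (q := ‖q ^ 5‖)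
    (by rw [norm_norm]; exact norm_pow_lt_one hq (by norm_num)) (‖q‖ ^ 4 * R ^ 5)
  refine ⟨_, hsum.mul_right (1 + R ^ 2), fun k x hx ↦ ?_⟩
  have hxR : ‖x‖ ≤ R := (mem_ball_zero_iff.1 hx).le
  have hR0 : 0 ≤ R := (norm_nonneg x).trans hxR
  have hlast : ‖1 - x ^ 2 * q ^ (2 * k + 1)‖ ≤ 1 + R ^ 2 := by
    calc ‖1 - x ^ 2 * q ^ (2 * k + 1)‖ ≤ ‖(1 : ℂ)‖ + ‖x ^ 2 * q ^ (2 * k + 1)‖ := norm_sub_le _ _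
      _ ≤ 1 + ‖x ^ 2‖ := by
        rw [norm_one]
        gcongr
        exact norm_mul_pow_le hq _ _
      _ ≤ 1 + R ^ 2 := by
        rw [norm_pow]
        gcongr
  calc ‖thetaTerm q k x‖
      = ‖q ^ 5‖ ^ k.choose 2 * (‖q‖ ^ 4 * ‖x‖ ^ 5) ^ k * ‖1 - x ^ 2 * q ^ (2 * k + 1)‖ := by
        simp only [thetaTerm, norm_mul, norm_pow, norm_neg, norm_one]
        ring
    _ ≤ ‖q ^ 5‖ ^ k.choose 2 * (‖q‖ ^ 4 * R ^ 5) ^ k * (1 + R ^ 2) := by gcongr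

lemma exists_summable_norm_tailTerm_le (hq : ‖q‖ < 1) (hR0 : 0 ≤ R) (hR : R * ‖q‖ < 1) :
    ∃ u : ℕ → ℝ, Summable u ∧ ∀ n x, x ∈ Metric.ball (0 : ℂ) R → ‖tailTerm q n x‖ ≤ u n := by
  obtain ⟨C, hC⟩ := exists_norm_rogersRamanujanPoly_le hq (R ^ 2 * ‖q‖)
  set B := Real.exp (R * ‖q‖ / (1 - ‖q‖)) * (R * ‖q‖)
  have hsum := (summable_geometric_of_lt_one (by positivity) hR).mul_left (B / (1 - ‖q‖) * C)
  refine ⟨_, hsum, fun n x hx ↦ ?_⟩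
  have hxR : ‖x‖ ≤ R := (mem_ball_zero_iff.1 hx).le
  have hdiff : ‖qPoch q (x * q) n - qPochInf q (x * q)‖ ≤ B * ‖q‖ ^ n / (1 - ‖q‖) :=
    norm_qPoch_sub_qPochInf_le hq (by rw [norm_mul]; gcongr) n
  have hpoly : ‖rogersRamanujanPoly q n (x ^ 2 * q)‖ ≤ C :=
    hC n _ (by rw [norm_mul, norm_pow]; gcongr)
  calc ‖tailTerm q n x‖
      = ‖qPoch q (x * q) n - qPochInf q (x * q)‖ * ‖x‖ ^ n
          * ‖rogersRamanujanPoly q n (x ^ 2 * q)‖ := by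
        rw [tailTerm, norm_mul, norm_mul, norm_pow]
    _ ≤ B * ‖q‖ ^ n / (1 - ‖q‖) * R ^ n * C := by
        have := (norm_nonneg _).trans hdiff
        gcongr
    _ = B / (1 - ‖q‖) * C * (R * ‖q‖) ^ n := by ring

lemma exists_summable_norm_limitTerm_le (hq : ‖q‖ < 1) (R : ℝ) :
    ∃ u : ℕ → ℝ, Summable u ∧ ∀ c x, x ∈ Metric.ball (0 : ℂ) R → ‖limitTerm q c x‖ ≤ u c := by
  have hsum := (summable_pow_sq_mul_pow (by rwa [norm_norm] : ‖‖q‖‖ < 1) (R ^ 3)).mul_right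
    (Real.exp (R / (1 - ‖q‖)))
  refine ⟨_, hsum, fun c x hx ↦ ?_⟩
  have hxR : ‖x‖ ≤ R := (mem_ball_zero_iff.1 hx).le
  have hR0 : 0 ≤ R := (norm_nonneg x).trans hxR
  rw [limitTerm, norm_mul, norm_mul, norm_pow, norm_pow, ← pow_mul]
  gcongr ?_ * ?_ ^ _ * ?_
  · exact pow_le_pow_of_le_one (norm_nonneg q) hq.le (Nat.le_add_right _ c)
  · exact norm_qPochInf_le hq ((norm_mul_pow_le hq x _).trans hxR)

lemma hasSum_pow_mul_rogersRamanujanPoly (hq : ‖q‖ < 1) (hx : ‖x‖ < 1) (y : ℂ) :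
    HasSum (fun n ↦ x ^ n * rogersRamanujanPoly q n y)
      (∑' c : ℕ, q ^ c ^ 2 * y ^ c * (x ^ c / qPoch q x (c + 1))) := by
  obtain ⟨C, hC⟩ := exists_norm_qBinom_le hq
  have hdouble : Summable (Function.uncurry fun n c : ℕ ↦
      q ^ c ^ 2 * y ^ c * (x ^ n * qBinom q n c)) := by
    refine (((summable_geometric_of_norm_lt_one hx).norm.mul_of_nonneg
      (summable_pow_sq_mul_pow hq y).norm (fun _ ↦ norm_nonneg _)
      fun _ ↦ norm_nonneg _).mul_right C).of_norm_bounded fun ⟨n, c⟩ ↦ ?_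
    rw [Function.uncurry_apply_pair, ← mul_assoc, norm_mul, norm_mul, mul_comm ‖x ^ n‖]
    gcongr
    exact hC _ _
  have hrow (n : ℕ) : HasSum (fun c ↦ q ^ c ^ 2 * y ^ c * (x ^ n * qBinom q n c))
      (x ^ n * rogersRamanujanPoly q n y) := by
    rw [rogersRamanujanPoly, Finset.mul_sum]
    simp only [mul_left_comm (x ^ n)]
    refine hasSum_sum_of_ne_finset_zero fun c hc ↦ ?_
    rw [qBinom_of_lt q (by simpa using hc), mul_zero, mul_zero]
  have htotal := hdouble.hasSum.prod_fiberwise hrow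
  rw [htotal.tsum_eq.symm.trans (tsum_congr fun n ↦ (hrow n).tsum_eq.symm),
    ← hdouble.tsum_comm] at htotal
  simpa only [tsum_mul_left, tsum_pow_mul_qBinom hq hx] using htotal

lemma deformedTerm_eq (hq : ‖q‖ < 1) (n : ℕ) (x : ℂ) :
    deformedTerm q n x = (1 - x) * tailTerm q n x
      + qPochInf q x * (x ^ n * rogersRamanujanPoly q n (x ^ 2 * q)) := by
  have hinf := qPochInf_eq_qPoch_mul hq x 1
  rw [qPoch_succ', qPoch_zero, mul_one, pow_one] at hinf
  rw [deformedTerm, tailTerm, qPoch_succ', hinf]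
  ring

lemma qPochInf_mul_pow_div_qPoch (hq : ‖q‖ < 1) (hx : ‖x‖ < 1) (c : ℕ) :
    qPochInf q x * (q ^ c ^ 2 * (x ^ 2 * q) ^ c * (x ^ c / qPoch q x (c + 1)))
      = limitTerm q c x := by
  have hne := qPoch_ne_zero hq hx (c + 1)
  rw [limitTerm, qPochInf_eq_qPoch_mul hq x (c + 1)]
  field_simp
  ring

lemma tsum_deformedTerm_eq_add (hq : ‖q‖ < 1) (hx : ‖x‖ < 1) :
    ∑' n, deformedTerm q n x = (1 - x) * ∑' n, tailTerm q n x + ∑' c, limitTerm q c x := by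
  obtain ⟨u, hu, htail⟩ := exists_summable_norm_tailTerm_le hq zero_le_one (by rwa [one_mul])
  have hsum : Summable fun n ↦ tailTerm q n x :=
    hu.of_norm_bounded fun n ↦ htail n x (mem_ball_zero_iff.2 hx)
  have hpoly := hasSum_pow_mul_rogersRamanujanPoly hq hx (x ^ 2 * q)
  calc ∑' n, deformedTerm q n x
      = ∑' n, ((1 - x) * tailTerm q n x
          + qPochInf q x * (x ^ n * rogersRamanujanPoly q n (x ^ 2 * q))) :=
        tsum_congr fun n ↦ deformedTerm_eq hq n x
    _ = (1 - x) * ∑' n, tailTerm q n x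
          + qPochInf q x * ∑' n, x ^ n * rogersRamanujanPoly q n (x ^ 2 * q) := by
        rw [(hsum.mul_left _).tsum_add (hpoly.summable.mul_left _), tsum_mul_left, tsum_mul_left]
    _ = (1 - x) * ∑' n, tailTerm q n x + ∑' c, limitTerm q c x := by
        rw [hpoly.tsum_eq, ← tsum_mul_left (a := qPochInf q x),
          tsum_congr (qPochInf_mul_pow_div_qPoch hq hx)]

lemma tsum_thetaTerm_eqOn_ball (hq : ‖q‖ < 1) (hR0 : 0 < R) (hR : R * ‖q‖ < 1) :
    Set.EqOn (fun x ↦ ∑' k, thetaTerm q k x)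
      (fun x ↦ (1 - x) * ∑' n, tailTerm q n x + ∑' c, limitTerm q c x) (Metric.ball 0 R) := by
  have hball := Metric.isOpen_ball (x := (0 : ℂ)) (ε := R)
  obtain ⟨u, hu, hule⟩ := exists_summable_norm_thetaTerm_le hq R
  obtain ⟨v, hv, hvle⟩ := exists_summable_norm_tailTerm_le hq hR0.le hR
  obtain ⟨w, hw, hwle⟩ := exists_summable_norm_limitTerm_le hq R
  have htheta := Complex.differentiableOn_tsum_of_summable_norm hu
    (fun k ↦ (differentiable_thetaTerm q k).differentiableOn) hball hule
  have htail := Complex.differentiableOn_tsum_of_summable_norm hv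
    (fun n ↦ (differentiable_tailTerm hq n).differentiableOn) hball hvle
  have hlimit := Complex.differentiableOn_tsum_of_summable_norm hw
    (fun c ↦ (differentiable_limitTerm hq c).differentiableOn) hball hwle
  have hright : DifferentiableOn ℂ
      (fun x ↦ (1 - x) * ∑' n, tailTerm q n x + ∑' c, limitTerm q c x) (Metric.ball 0 R) := by
    fun_prop
  refine (htheta.analyticOnNhd hball).eqOn_of_preconnected_of_eventuallyEq
    (hright.analyticOnNhd hball) (convex_ball 0 R).isPreconnected (Metric.mem_ball_self hR0) ?_
  filter_upwards [Metric.ball_mem_nhds 0 hR0, Metric.ball_mem_nhds 0 one_pos] with x hxR hx1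
  rw [mem_ball_zero_iff] at hx1
  have hsum : Summable fun k ↦ thetaTerm q k x := hu.of_norm_bounded fun k ↦ hule k x hxR
  exact (tendsto_nhds_unique hsum.hasSum.tendsto_sum_nat
    (tendsto_sum_thetaTerm hq hx1)).trans (tsum_deformedTerm_eq_add hq hx1)

end Continuation

section DerivativeAtOne

variable {q : ℂ}

lemma exists_one_lt_mul_norm_lt_one (hq : ‖q‖ < 1) : ∃ R : ℝ, 1 < R ∧ R * ‖q‖ < 1 := by
  have hcont : Tendsto (fun R : ℝ ↦ R * ‖q‖) (𝓝[>] 1) (𝓝 (1 * ‖q‖)) :=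
    (tendsto_id.mono_left nhdsWithin_le_nhds).mul_const _
  exact (eventually_mem_nhdsWithin.and (hcont.eventually_lt_const (by rwa [one_mul]))).exists

lemma one_mem_ball_zero {R : ℝ} (hR : 1 < R) : (1 : ℂ) ∈ Metric.ball 0 R := by
  rwa [mem_ball_zero_iff, norm_one]

lemma summable_thetaTerm_one (hq : ‖q‖ < 1) : Summable fun k ↦ thetaTerm q k 1 := by
  obtain ⟨u, hu, hle⟩ := exists_summable_norm_thetaTerm_le hq 2
  exact hu.of_norm_bounded fun k ↦ hle k 1 (one_mem_ball_zero one_lt_two)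

lemma summable_tailTerm_one (hq : ‖q‖ < 1) : Summable fun n ↦ tailTerm q n 1 := by
  obtain ⟨R, hR1, hRq⟩ := exists_one_lt_mul_norm_lt_one hq
  obtain ⟨u, hu, hle⟩ := exists_summable_norm_tailTerm_le hq (one_pos.trans hR1).le hRq
  exact hu.of_norm_bounded fun n ↦ hle n 1 (one_mem_ball_zero hR1)

lemma summable_limitTerm_one (hq : ‖q‖ < 1) : Summable fun c ↦ limitTerm q c 1 := by
  obtain ⟨u, hu, hle⟩ := exists_summable_norm_limitTerm_le hq 2
  exact hu.of_norm_bounded fun c ↦ hle c 1 (one_mem_ball_zero one_lt_two)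

lemma hasSum_deriv_thetaTerm_one (hq : ‖q‖ < 1) :
    HasSum (fun k ↦ deriv (thetaTerm q k) 1) (deriv (fun x ↦ ∑' k, thetaTerm q k x) 1) := by
  obtain ⟨u, hu, hle⟩ := exists_summable_norm_thetaTerm_le hq 2
  exact Complex.hasSum_deriv_of_summable_norm hu
    (fun k ↦ (differentiable_thetaTerm q k).differentiableOn) Metric.isOpen_ball hle
    (one_mem_ball_zero one_lt_two)

lemma hasSum_deriv_limitTerm_one (hq : ‖q‖ < 1) :
    HasSum (fun c ↦ deriv (limitTerm q c) 1) (deriv (fun x ↦ ∑' c, limitTerm q c x) 1) := by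
  obtain ⟨u, hu, hle⟩ := exists_summable_norm_limitTerm_le hq 2
  exact Complex.hasSum_deriv_of_summable_norm hu
    (fun c ↦ (differentiable_limitTerm hq c).differentiableOn) Metric.isOpen_ball hle
    (one_mem_ball_zero one_lt_two)

lemma tsum_thetaTerm_one_eq_tsum_limitTerm_one (hq : ‖q‖ < 1) :
    ∑' k, thetaTerm q k 1 = ∑' c, limitTerm q c 1 := by
  obtain ⟨R, hR1, hRq⟩ := exists_one_lt_mul_norm_lt_one hq
  simpa using tsum_thetaTerm_eqOn_ball hq (one_pos.trans hR1) hRq (one_mem_ball_zero hR1)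

lemma tsum_deriv_thetaTerm_one (hq : ‖q‖ < 1) :
    ∑' k, deriv (thetaTerm q k) 1
      = -∑' n, tailTerm q n 1 + ∑' c, deriv (limitTerm q c) 1 := by
  obtain ⟨R, hR1, hRq⟩ := exists_one_lt_mul_norm_lt_one hq
  have hR0 := one_pos.trans hR1
  have hnhds : Metric.ball (0 : ℂ) R ∈ 𝓝 1 := Metric.isOpen_ball.mem_nhds (one_mem_ball_zero hR1)
  obtain ⟨u, hu, hule⟩ := exists_summable_norm_tailTerm_le hq hR0.le hRq
  obtain ⟨v, hv, hvle⟩ := exists_summable_norm_limitTerm_le hq R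
  have htail := ((Complex.differentiableOn_tsum_of_summable_norm hu
    (fun n ↦ (differentiable_tailTerm hq n).differentiableOn)
    Metric.isOpen_ball hule).differentiableAt hnhds).hasDerivAt
  have hlimit := ((Complex.differentiableOn_tsum_of_summable_norm hv
    (fun c ↦ (differentiable_limitTerm hq c).differentiableOn)
    Metric.isOpen_ball hvle).differentiableAt hnhds).hasDerivAt
  have hright := ((((hasDerivAt_id (1 : ℂ)).const_sub 1).mul htail).add hlimit).deriv
  rw [(hasSum_deriv_thetaTerm_one hq).tsum_eq, (hasSum_deriv_limitTerm_one hq).tsum_eq,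
    ((tsum_thetaTerm_eqOn_ball hq hR0 hRq).eventuallyEq_of_mem hnhds).deriv_eq]
  refine hright.trans ?_
  simp

lemma deriv_thetaTerm_one (q : ℂ) (k : ℕ) :
    deriv (thetaTerm q k) 1 = (-1) ^ k * q ^ (5 * k.choose 2 + 4 * k) *
      (5 * k - (5 * k + 2) * q ^ (2 * k + 1)) := by
  have h := ((hasDerivAt_pow (5 * k) (1 : ℂ)).const_mul
    ((-1) ^ k * q ^ (5 * k.choose 2 + 4 * k))).mul
    (((hasDerivAt_pow 2 (1 : ℂ)).mul_const (q ^ (2 * k + 1))).const_sub 1)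
  refine h.deriv.trans ?_
  push_cast
  simp only [one_pow, mul_one]
  ring

lemma tailTerm_one (q : ℂ) (n : ℕ) :
    tailTerm q n 1 = ∑ c ∈ Finset.range (n + 1),
      (qPoch q q n - qPochInf q q) * q ^ (c ^ 2 + c) * qBinom q n c := by
  simp only [tailTerm, rogersRamanujanPoly, one_mul, one_pow, mul_one, Finset.mul_sum, pow_add,
    mul_assoc]

lemma pow_mul_tsum_eq_lambert_sub (hq : ‖q‖ < 1) (c : ℕ) :
    q ^ (c + 1) * ∑' n : ℕ, q ^ n / (1 - q ^ (c + 1) * q ^ n)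
      = ∑' i : ℕ, q ^ (i + 1) / (1 - q ^ (i + 1)) - ∑ i ∈ Finset.Icc 1 c, q ^ i / (1 - q ^ i) := by
  rw [← (summable_lambert hq).sum_add_tsum_nat_add c, ← Finset.Ico_add_one_right_eq_Icc,
    Finset.sum_Ico_eq_sum_range, Nat.add_sub_cancel, ← tsum_mul_left]
  simp only [add_comm 1, add_sub_cancel_left]
  refine tsum_congr fun n ↦ ?_
  rw [← mul_div_assoc, ← pow_add, add_right_comm, add_comm c n]

lemma deriv_limitTerm_one (hq : ‖q‖ < 1) (c : ℕ) :
    deriv (limitTerm q c) 1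
      = qPochInf q q * (q ^ (c ^ 2 + c) / qPoch q q c *
          (3 * (c : ℂ) + ∑ i ∈ Finset.Icc 1 c, q ^ i / (1 - q ^ i)))
        - (∑' i : ℕ, q ^ (i + 1) / (1 - q ^ (i + 1))) * limitTerm q c 1 := by
  have hinf := hasDerivAt_qPochInf hq
    (one_sub_mul_pow_ne_zero hq (norm_pow_lt_one hq c.succ_ne_zero))
  have hshift : HasDerivAt (fun x ↦ qPochInf q (x * q ^ (c + 1))) _ 1 :=
    hinf.comp_of_eq (1 : ℂ) ((hasDerivAt_id (1 : ℂ)).mul_const (q ^ (c + 1))) (one_mul _).symm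
  have hterm := (((hasDerivAt_pow (3 * c) (1 : ℂ)).const_mul (q ^ (c ^ 2 + c))).mul hshift).deriv
  have hfactor : qPochInf q q = qPoch q q c * qPochInf q (q ^ (c + 1)) := by
    rw [qPochInf_eq_qPoch_mul hq q c, pow_succ']
  have hlambert := pow_mul_tsum_eq_lambert_sub hq c
  have hne := qPoch_ne_zero hq hq c
  refine hterm.trans ?_
  rw [limitTerm, hfactor]
  push_cast
  simp only [one_mul, one_pow, mul_one]
  field_simp
  linear_combination (-(q ^ (c ^ 2 + c) * qPochInf q (q ^ (c + 1)))) * hlambert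

lemma hasSum_qPochInf_mul_limitSeries (hq : ‖q‖ < 1) :
    HasSum (fun c : ℕ ↦ qPochInf q q * (q ^ (c ^ 2 + c) / qPoch q q c *
        (3 * (c : ℂ) + ∑ i ∈ Finset.Icc 1 c, q ^ i / (1 - q ^ i))))
      (∑' c, deriv (limitTerm q c) 1
        + (∑' i : ℕ, q ^ (i + 1) / (1 - q ^ (i + 1))) * ∑' c, limitTerm q c 1) := by
  refine ((hasSum_deriv_limitTerm_one hq).summable.hasSum.add
    ((summable_limitTerm_one hq).hasSum.mul_left _)).congr_fun fun c ↦ ?_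
  rw [deriv_limitTerm_one hq, sub_add_cancel]

end DerivativeAtOne

section Character

variable {q : ℂ}

lemma chi20_0_ten_mul_add_three (k : ℕ) : chi20_0 (10 * k + 3) = (-1) ^ k := by
  obtain ⟨m, rfl | rfl⟩ := k.even_or_odd'
  · rw [chi20_0, if_pos (by omega)]
    simp
  · rw [chi20_0, if_neg (by omega), if_pos (by omega)]
    simp [pow_succ]

lemma chi20_0_ten_mul_add_seven (k : ℕ) : chi20_0 (10 * k + 7) = -(-1) ^ k := by
  obtain ⟨m, rfl | rfl⟩ := k.even_or_odd'
  · rw [chi20_0, if_neg (by omega), if_pos (by omega)]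
    simp
  · rw [chi20_0, if_pos (by omega)]
    simp [pow_succ]

lemma mod_ten_of_chi20_0_ne_zero {n : ℕ} (hn : chi20_0 n ≠ 0) : n % 10 = 3 ∨ n % 10 = 7 := by
  contrapose! hn
  rw [chi20_0, if_neg (by omega), if_neg (by omega)]

lemma ten_mul_add_three_sq_sub_div (k : ℕ) :
    ((10 * k + 3) ^ 2 - 9) / 40 = 5 * k.choose 2 + 4 * k := by
  have hk := sq_eq_two_mul_choose_two_add k
  have hsq : (10 * k + 3) ^ 2 = 40 * (5 * k.choose 2 + 4 * k) + 9 := by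
    linear_combination 100 * hk
  omega

lemma ten_mul_add_seven_sq_sub_div (k : ℕ) :
    ((10 * k + 7) ^ 2 - 9) / 40 = 5 * k.choose 2 + 4 * k + (2 * k + 1) := by
  have hk := sq_eq_two_mul_choose_two_add k
  have hsq : (10 * k + 7) ^ 2 = 40 * (5 * k.choose 2 + 4 * k + (2 * k + 1)) + 9 := by
    linear_combination 100 * hk
  omega

lemma summable_natCast_add_mul_pow (hq : ‖q‖ < 1) (a : ℂ) {e : ℕ → ℕ} (he : ∀ k, k ≤ e k) :
    Summable fun k : ℕ ↦ ((k : ℂ) + a) * (-1) ^ k * q ^ e k := by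
  have hlinear := (summable_norm_pow_mul_geometric_of_norm_lt_one 1 hq).add
    ((summable_geometric_of_norm_lt_one hq).norm.mul_left ‖a‖)
  refine hlinear.of_norm_bounded fun k ↦ ?_
  have hpow : ‖q‖ ^ e k ≤ ‖q‖ ^ k := pow_le_pow_of_le_one (norm_nonneg q) hq.le (he k)
  calc ‖((k : ℂ) + a) * (-1) ^ k * q ^ e k‖ = ‖(k : ℂ) + a‖ * ‖q‖ ^ e k := by simp
    _ ≤ (‖(k : ℂ)‖ + ‖a‖) * ‖q‖ ^ k := by
        gcongr
        exact norm_add_le _ _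
    _ = ‖(k : ℂ) ^ 1 * q ^ k‖ + ‖a‖ * ‖q ^ k‖ := by
        rw [pow_one, norm_mul, norm_pow, add_mul]

lemma hasSum_of_comp_injective {ι κ κ' M : Type*} [AddCommMonoid M] [TopologicalSpace M]
    [ContinuousAdd M] {f : ι → M} {i : κ → ι} {j : κ' → ι} {a b : M} (hi : i.Injective)
    (hj : j.Injective) (hij : Disjoint (Set.range i) (Set.range j))
    (hf : f.support ⊆ Set.range i ∪ Set.range j) (ha : HasSum (f ∘ i) a) (hb : HasSum (f ∘ j) b) :
    HasSum f (a + b) :=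
  (hasSum_subtype_iff_of_support_subset hf).1
    ((hi.hasSum_range_iff.2 ha).add_disjoint hij (hj.hasSum_range_iff.2 hb))

lemma hasSum_chi20_0 (hq : ‖q‖ < 1) :
    HasSum (fun n : ℕ ↦ ((n : ℂ) / 2) * (chi20_0 n : ℂ) * q ^ ((n ^ 2 - 9) / 40))
      (∑' k, deriv (thetaTerm q k) 1 + 3 / 2 * ∑' k, thetaTerm q k 1) := by
  set f : ℕ → ℂ := fun n ↦ ((n : ℂ) / 2) * (chi20_0 n : ℂ) * q ^ ((n ^ 2 - 9) / 40)
  have hthree (k : ℕ) : f (10 * k + 3)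
      = 5 * (((k : ℂ) + 3 / 10) * (-1) ^ k * q ^ (5 * k.choose 2 + 4 * k)) := by
    simp only [f, chi20_0_ten_mul_add_three, ten_mul_add_three_sq_sub_div]
    push_cast
    ring
  have hseven (k : ℕ) : f (10 * k + 7)
      = -5 * (((k : ℂ) + 7 / 10) * (-1) ^ k * q ^ (5 * k.choose 2 + 4 * k + (2 * k + 1))) := by
    simp only [f, chi20_0_ten_mul_add_seven, ten_mul_add_seven_sq_sub_div]
    push_cast
    ring
  have hsum_three : Summable fun k ↦ f (10 * k + 3) := by
    simp only [hthree]
    exact (summable_natCast_add_mul_pow hq _ fun k ↦ by omega).mul_left 5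
  have hsum_seven : Summable fun k ↦ f (10 * k + 7) := by
    simp only [hseven]
    exact (summable_natCast_add_mul_pow hq _ fun k ↦ by omega).mul_left (-5)
  have hvalue : ∑' k, deriv (thetaTerm q k) 1 + 3 / 2 * ∑' k, thetaTerm q k 1
      = ∑' k, f (10 * k + 3) + ∑' k, f (10 * k + 7) := by
    rw [← tsum_mul_left, ← (hasSum_deriv_thetaTerm_one hq).summable.tsum_add
      ((summable_thetaTerm_one hq).mul_left _), ← hsum_three.tsum_add hsum_seven]
    refine tsum_congr fun k ↦ ?_
    rw [deriv_thetaTerm_one, thetaTerm, hthree, hseven]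
    ring
  rw [hvalue]
  refine hasSum_of_comp_injective (fun k l h ↦ by simpa using h) (fun k l h ↦ by simpa using h)
    (Set.disjoint_left.2 ?_) (fun n hn ↦ ?_) hsum_three.hasSum hsum_seven.hasSum
  · rintro _ ⟨k, rfl⟩ ⟨l, hl⟩
    dsimp only at hl
    omega
  · have hchi : chi20_0 n ≠ 0 := fun h ↦ hn (by simp [f, h])
    exact (mod_ten_of_chi20_0_ne_zero hchi).imp (fun h ↦ ⟨n / 10, by dsimp only; omega⟩)
      fun h ↦ ⟨n / 10, by dsimp only; omega⟩

end Character

theorem stmt_6 (q : ℂ) (hq : ‖q‖ < 1) :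
    Summable (fun n : ℕ => ((n : ℂ) / 2) * (chi20_0 n : ℂ) * q ^ ((n ^ 2 - 9) / 40)) ∧
    Summable (fun n : ℕ => ∑ c ∈ Finset.range (n + 1),
      (qPoch q q n - qPochInf q q) * q ^ (c ^ 2 + c) * qBinom q n c) ∧
    Summable (fun c : ℕ => q ^ (c ^ 2 + c) / qPoch q q c *
      (3 * (c : ℂ) + ∑ i ∈ Finset.Icc 1 c, q ^ i / (1 - q ^ i))) ∧
    Summable (fun i : ℕ => q ^ (i + 1) / (1 - q ^ (i + 1))) ∧
    ∑' n : ℕ, ((n : ℂ) / 2) * (chi20_0 n : ℂ) * q ^ ((n ^ 2 - 9) / 40)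
      = -∑' n : ℕ, ∑ c ∈ Finset.range (n + 1),
            (qPoch q q n - qPochInf q q) * q ^ (c ^ 2 + c) * qBinom q n c
        + qPochInf q q * ∑' c : ℕ, q ^ (c ^ 2 + c) / qPoch q q c *
            (3 * (c : ℂ) + ∑ i ∈ Finset.Icc 1 c, q ^ i / (1 - q ^ i))
        + qPochInf (q ^ 5) q * qPochInf (q ^ 5) (q ^ 4) * qPochInf (q ^ 5) (q ^ 5) *
            (3 / 2 - ∑' i : ℕ, q ^ (i + 1) / (1 - q ^ (i + 1))) := by
  have hchi := hasSum_chi20_0 hq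
  have hlimit := hasSum_qPochInf_mul_limitSeries hq
  have hne := qPochInf_ne_zero hq (one_sub_mul_pow_ne_zero hq hq)
  simp only [← tailTerm_one]
  refine ⟨hchi.summable, summable_tailTerm_one hq, (summable_mul_left_iff hne).1 hlimit.summable,
    summable_lambert hq, ?_⟩
  rw [hchi.tsum_eq, ← tsum_mul_left (a := qPochInf q q), hlimit.tsum_eq,
    tsum_deriv_thetaTerm_one hq, ← tsum_thetaTerm_one_eq_tsum_limitTerm_one hq,
    tsum_thetaTerm_one hq]
  ring
end

section
/- Let m ≥ 1 and 0 ≤ a ≤ m−1 be integers and set T_m^{(a)}(n) = (1/2)·(−1)^{n+1}·L(−2n−1, χ_{8m+4}^{(a)}), where L(s, χ_{8m+4}^{(a)}) is the entire analytic continuation of Σ_{n≥1} χ_{8m+4}^{(a)}(n) n^{−s}. Then for every K ∈ ℕ, as t → 0⁺ (t real, positive), −(1/2)·Σ_{n=1}^∞ n·χ_{8m+4}^{(a)}(n)·exp(−t·(n² − (2m−2a−1)²)/(8(2m+1))) = e^{(2m−2a−1)²·t/(8(2m+1))} · Σ_{n=0}^{K−1} (T_m^{(a)}(n)/n!)·(t/(8(2m+1)))^n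 + O(t^K). -/
open scoped Topology

/-- The (8m+4)-periodic function `χ_{8m+4}^{(a)}` (for `1 ≤ m`, `a ≤ m-1`):
it equals 1 at `n ≡ 2m-2a-1, 6m+2a+5 (mod 8m+4)`, `-1` at
`n ≡ 2m+2a+3, 6m-2a+1 (mod 8m+4)`, and 0 otherwise. -/
def chiGen (m a n : ℕ) : ℤ :=
  if n % (8 * m + 4) = (2 * m - 2 * a - 1) % (8 * m + 4) then 1
  else if n % (8 * m + 4) = (6 * m + 2 * a + 5) % (8 * m + 4) then 1
  else if n % (8 * m + 4) = (2 * m + 2 * a + 3) % (8 * m + 4) then -1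
  else if n % (8 * m + 4) = (6 * m - 2 * a + 1) % (8 * m + 4) then -1
  else 0

/-!
Split `∑ Φ(n) f(εn)`, for `Φ` periodic modulo `N` with sum zero over a period, into residue classes
and expand each class by the Euler–Maclaurin formula. The main terms `(εN)⁻¹ ∫ f` cancel. The
boundary terms at `0` carry Bernoulli values `B_{j+1}(r/N)`, that is, Hurwitz zeta values at `-j`,
so they add up to `∑ L(-j, Φ) f⁽ʲ⁾(0) εʲ / j!`.

For `f(x) = x exp(-x²/2)` the left-hand side is `ε` times a half-derivative theta series at `ε²/2`,
while the even-order Taylor coefficients of `f` vanish and the one of order `2k+1` is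
`(-1)ᵏ / (2ᵏ k!)`: only the values `L(-2k-1, Φ)` survive.
-/

section EulerMaclaurin

open MeasureTheory Set Filter intervalIntegral
open Finset (range)

variable {E : Type*} [NormedAddCommGroup E] [NormedSpace ℝ E]

/-- The error at `x ∈ [0, 1]` of the Euler–Maclaurin expansion of `f x` with `J` boundary terms, in
which the differences `f⁽ʲ⁾(1) - f⁽ʲ⁾(0)` are weighted by `B_{j+1}(x) / (j+1)!`. -/
noncomputable def eulerMaclaurinRemainder (J : ℕ) (f : ℝ → E) (x : ℝ) : E :=
  f x - (∫ t in (0 : ℝ)..1, f t) -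
    ∑ j ∈ range J, (bernoulliFun (j + 1) x / (j + 1).factorial) •
      (iteratedDeriv j f 1 - iteratedDeriv j f 0)

variable [CompleteSpace E] {f : ℝ → E} {x : ℝ}

lemma norm_smul_sub_intervalIntegral_le {a b : ℝ} (hf : ContDiff ℝ 1 f) (hx : x ∈ Icc a b) :
    ‖(b - a) • f x - ∫ t in a..b, f t‖ ≤ (b - a) * ∫ t in a..b, ‖deriv f t‖ := by
  have hab : a ≤ b := hx.1.trans hx.2
  have hf' : Continuous (deriv f) := hf.continuous_deriv le_rfl
  have oscillation : ∀ y ∈ Icc a b, ‖f x - f y‖ ≤ ∫ t in a..b, ‖deriv f t‖ := by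
    intro y hy
    rw [← integral_deriv_eq_sub (fun t _ ↦ hf.differentiable one_ne_zero t)
      (hf'.intervalIntegrable y x)]
    calc ‖∫ t in y..x, deriv f t‖
        ≤ |∫ t in y..x, ‖deriv f t‖| := norm_integral_le_abs_integral_norm
      _ ≤ |∫ t in a..b, ‖deriv f t‖| :=
          abs_integral_mono_interval
            (uIoc_subset_uIoc_of_uIcc_subset_uIcc
              (uIcc_subset_uIcc (by rwa [uIcc_of_le hab]) (by rwa [uIcc_of_le hab])))
            (.of_forall fun t ↦ norm_nonneg _) (hf'.norm.intervalIntegrable a b)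
      _ = ∫ t in a..b, ‖deriv f t‖ :=
          abs_of_nonneg (integral_nonneg hab fun t _ ↦ norm_nonneg _)
  calc ‖(b - a) • f x - ∫ t in a..b, f t‖
      = ‖∫ t in a..b, (f x - f t)‖ := by
        rw [intervalIntegral.integral_sub intervalIntegrable_const
          (hf.continuous.intervalIntegrable a b), intervalIntegral.integral_const]
    _ ≤ (∫ t in a..b, ‖deriv f t‖) * |b - a| :=
        norm_integral_le_of_norm_le_const fun y hy ↦
          oscillation y (Ioc_subset_Icc_self (by rwa [uIoc_of_le hab] at hy))
    _ = (b - a) * ∫ t in a..b, ‖deriv f t‖ := by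
        rw [abs_of_nonneg (sub_nonneg.2 hab), mul_comm]

lemma hasDerivAt_eulerMaclaurinRemainder_succ (hf : ContDiff ℝ 1 f) (J : ℕ) (x : ℝ) :
    HasDerivAt (eulerMaclaurinRemainder (J + 1) f) (eulerMaclaurinRemainder J (deriv f) x) x := by
  have hB (j : ℕ) : HasDerivAt (fun y ↦ bernoulliFun (j + 1) y / (j + 1).factorial)
      (bernoulliFun j x / j.factorial) x := by
    convert! (antideriv_bernoulliFun j x).div_const (j.factorial : ℝ) using 2
    rw [Nat.factorial_succ]
    push_cast
    rw [div_div]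
  have hsum := HasDerivAt.fun_sum (u := range (J + 1)) fun j _ ↦
    (hB j).smul_const (iteratedDeriv j f 1 - iteratedDeriv j f 0)
  refine (((hf.differentiable one_ne_zero x).hasDerivAt.sub_const
    (∫ t in (0 : ℝ)..1, f t)).sub hsum).congr_deriv ?_
  rw [eulerMaclaurinRemainder, integral_deriv_eq_sub
    (fun t _ ↦ hf.differentiable one_ne_zero t)
    ((hf.continuous_deriv le_rfl).intervalIntegrable 0 1), Finset.sum_range_succ']
  simp only [iteratedDeriv_succ', iteratedDeriv_zero, bernoulliFun_zero, Nat.factorial_zero,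
    Nat.cast_one, div_one, one_smul]
  abel

omit [CompleteSpace E] in
lemma continuous_eulerMaclaurinRemainder (hf : Continuous f) (J : ℕ) :
    Continuous (eulerMaclaurinRemainder J f) := by
  unfold eulerMaclaurinRemainder
  fun_prop

lemma integral_eulerMaclaurinRemainder (hf : Continuous f) (J : ℕ) :
    ∫ x in (0 : ℝ)..1, eulerMaclaurinRemainder J f x = 0 := by
  have hB (j : ℕ) : Continuous fun x ↦ (bernoulliFun (j + 1) x / (j + 1).factorial) •
      (iteratedDeriv j f 1 - iteratedDeriv j f 0) := by fun_prop
  unfold eulerMaclaurinRemainder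
  rw [intervalIntegral.integral_sub
      ((hf.intervalIntegrable 0 1).sub intervalIntegrable_const)
      ((continuous_finsetSum _ fun j _ ↦ hB j).intervalIntegrable 0 1),
    intervalIntegral.integral_sub (hf.intervalIntegrable 0 1) intervalIntegrable_const,
    intervalIntegral.integral_finsetSum fun j _ ↦ (hB j).intervalIntegrable 0 1]
  simp [intervalIntegral.integral_smul_const, integral_bernoulliFun_eq_zero]

theorem norm_eulerMaclaurinRemainder_le {J : ℕ} (hf : ContDiff ℝ (J + 1) f)
    (hx : x ∈ Icc (0 : ℝ) 1) :
    ‖eulerMaclaurinRemainder J f x‖ ≤ ∫ t in (0 : ℝ)..1, ‖iteratedDeriv (J + 1) f t‖ := by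
  -- Having mean zero, the remainder is bounded by the `L¹` norm of its derivative, which is the
  -- remainder of `deriv f` with one boundary term less.
  induction J generalizing f x with
  | zero =>
    simpa [eulerMaclaurinRemainder] using norm_smul_sub_intervalIntegral_le (by simpa using hf) hx
  | succ J ih =>
    have hf₁ : ContDiff ℝ 1 f := hf.of_le (by norm_cast; lia)
    have hf' : ContDiff ℝ (J + 1) (deriv f) :=
      (contDiff_succ_iff_deriv.1 (by exact_mod_cast hf)).2.2
    have hderiv := hasDerivAt_eulerMaclaurinRemainder_succ hf₁ J
    have hderiv' : deriv (eulerMaclaurinRemainder (J + 1) f) =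
        eulerMaclaurinRemainder J (deriv f) := funext fun y ↦ (hderiv y).deriv
    have hC1 : ContDiff ℝ 1 (eulerMaclaurinRemainder (J + 1) f) :=
      contDiff_one_iff_deriv.2 ⟨fun y ↦ (hderiv y).differentiableAt,
        hderiv' ▸ continuous_eulerMaclaurinRemainder hf'.continuous J⟩
    calc ‖eulerMaclaurinRemainder (J + 1) f x‖
        = ‖eulerMaclaurinRemainder (J + 1) f x -
            ∫ t in (0 : ℝ)..1, eulerMaclaurinRemainder (J + 1) f t‖ := by
          rw [integral_eulerMaclaurinRemainder hf.continuous, sub_zero]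
      _ ≤ ∫ t in (0 : ℝ)..1, ‖eulerMaclaurinRemainder J (deriv f) t‖ := by
          simpa [hderiv'] using norm_smul_sub_intervalIntegral_le hC1 hx
      _ ≤ ∫ _ in (0 : ℝ)..1, ∫ t in (0 : ℝ)..1, ‖iteratedDeriv (J + 2) f t‖ := by
          refine integral_mono_on zero_le_one ?_ intervalIntegrable_const fun y hy ↦ ?_
          · exact (continuous_eulerMaclaurinRemainder hf'.continuous J).norm.intervalIntegrable 0 1
          · rw [iteratedDeriv_succ']; exact ih hf' hy
      _ = _ := by simp

theorem norm_sum_sub_intervalIntegral_sub_le {J : ℕ} (hf : ContDiff ℝ (J + 1) f)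
    (hx : x ∈ Icc (0 : ℝ) 1) (n : ℕ) :
    ‖∑ k ∈ range n, f (k + x) - (∫ t in (0 : ℝ)..n, f t) -
        ∑ j ∈ range J, (bernoulliFun (j + 1) x / (j + 1).factorial) •
          (iteratedDeriv j f n - iteratedDeriv j f 0)‖ ≤
      ∫ t in (0 : ℝ)..n, ‖iteratedDeriv (J + 1) f t‖ := by
  have hcont : Continuous (iteratedDeriv (J + 1) f) :=
    hf.continuous_iteratedDeriv (J + 1) (by norm_cast)
  have remainder_translate (k : ℕ) : eulerMaclaurinRemainder J (fun t ↦ f (t + k)) x =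
      f (k + x) - (∫ t in (k : ℝ)..(k + 1 : ℕ), f t) -
        ∑ j ∈ range J, (bernoulliFun (j + 1) x / (j + 1).factorial) •
          (iteratedDeriv j f (k + 1 : ℕ) - iteratedDeriv j f k) := by
    simp [eulerMaclaurinRemainder, iteratedDeriv_comp_add_const, add_comm]
  have remainder_translate_le (k : ℕ) : ‖eulerMaclaurinRemainder J (fun t ↦ f (t + k)) x‖ ≤
      ∫ t in (k : ℝ)..(k + 1 : ℕ), ‖iteratedDeriv (J + 1) f t‖ := by
    have hf_k : ContDiff ℝ (J + 1) fun t ↦ f (t + k) := hf.comp (contDiff_id.add contDiff_const)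
    refine (norm_eulerMaclaurinRemainder_le hf_k hx).trans_eq ?_
    simp only [iteratedDeriv_comp_add_const]
    rw [integral_comp_add_right fun t ↦ ‖iteratedDeriv (J + 1) f t‖]
    simp [add_comm]
  have sum_remainder : ∑ k ∈ range n, eulerMaclaurinRemainder J (fun t ↦ f (t + k)) x =
      ∑ k ∈ range n, f (k + x) - (∫ t in (0 : ℝ)..n, f t) -
        ∑ j ∈ range J, (bernoulliFun (j + 1) x / (j + 1).factorial) •
          (iteratedDeriv j f n - iteratedDeriv j f 0) := by
    simp_rw [remainder_translate, Finset.sum_sub_distrib]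
    rw [sum_integral_adjacent_intervals fun k _ ↦ hf.continuous.intervalIntegrable _ _,
      Finset.sum_comm, Nat.cast_zero]
    congr 1
    refine Finset.sum_congr rfl fun j _ ↦ ?_
    rw [← Finset.smul_sum, Finset.sum_range_sub fun k : ℕ ↦ iteratedDeriv j f k, Nat.cast_zero]
  rw [← sum_remainder, ← Nat.cast_zero, ← sum_integral_adjacent_intervals fun k _ ↦
    hcont.norm.intervalIntegrable _ _]
  exact norm_sum_le_of_le _ fun k _ ↦ remainder_translate_le k

theorem summable_of_contDiff_of_integrableOn_Ioi (hf : ContDiff ℝ 1 f)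
    (hint : IntegrableOn f (Ioi 0)) (hint' : IntegrableOn (deriv f) (Ioi 0))
    (hx : x ∈ Icc (0 : ℝ) 1) : Summable fun k : ℕ ↦ f (k + x) := by
  have hf' : Continuous (deriv f) := hf.continuous_deriv le_rfl
  have hbound (k : ℕ) : ‖f (k + x)‖ ≤ ∫ t in (k : ℝ)..(k + 1 : ℕ), (‖f t‖ + ‖deriv f t‖) := by
    have hmem : (k + x) ∈ Icc (k : ℝ) (k + 1 : ℕ) := by
      push_cast; exact ⟨by linarith [hx.1], by linarith [hx.2]⟩
    have hosc := norm_smul_sub_intervalIntegral_le hf hmem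
    rw [Nat.cast_succ, add_sub_cancel_left, one_smul, one_mul] at hosc
    rw [integral_add (hf.continuous.norm.intervalIntegrable _ _)
      (hf'.norm.intervalIntegrable _ _), Nat.cast_succ]
    calc ‖f (k + x)‖
        ≤ ‖∫ t in (k : ℝ)..k + 1, f t‖ + ‖f (k + x) - ∫ t in (k : ℝ)..k + 1, f t‖ :=
          norm_le_insert' _ _
      _ ≤ _ := add_le_add (norm_integral_le_integral_norm (by linarith)) hosc
  refine Summable.of_norm (summable_of_sum_range_le (c := ∫ t in Ioi 0, (‖f t‖ + ‖deriv f t‖))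
    (fun _ ↦ norm_nonneg _) fun n ↦ (Finset.sum_le_sum fun k _ ↦ hbound k).trans ?_)
  rw [sum_integral_adjacent_intervals (a := fun k : ℕ ↦ (k : ℝ)) fun k _ ↦
    Continuous.intervalIntegrable (by fun_prop) _ _, Nat.cast_zero,
    integral_of_le n.cast_nonneg]
  exact setIntegral_mono_set (hint.norm.add hint'.norm)
    (.of_forall fun t ↦ by positivity) Ioc_subset_Ioi_self.eventuallyLE

theorem norm_tsum_sub_integral_Ioi_add_le {J : ℕ} (hf : ContDiff ℝ (J + 1) f)
    (hint : ∀ j ≤ J + 1, IntegrableOn (iteratedDeriv j f) (Ioi 0)) (hx : x ∈ Icc (0 : ℝ) 1) :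
    ‖∑' k : ℕ, f (k + x) - (∫ t in Ioi 0, f t) +
        ∑ j ∈ range J, (bernoulliFun (j + 1) x / (j + 1).factorial) • iteratedDeriv j f 0‖ ≤
      ∫ t in Ioi 0, ‖iteratedDeriv (J + 1) f t‖ := by
  have hsum : Summable fun k : ℕ ↦ f (k + x) :=
    summable_of_contDiff_of_integrableOn_Ioi (hf.of_le (by norm_cast; lia))
      (by simpa using hint 0 (by lia)) (by simpa using hint 1 (by lia)) hx
  have boundary_tendsto (j : ℕ) (hj : j < J) :
      Tendsto (fun n : ℕ ↦ iteratedDeriv j f n) atTop (𝓝 0) := by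
    refine (tendsto_zero_of_hasDerivAt_of_integrableOn_Ioi (a := 0) (f' := iteratedDeriv (j + 1) f)
      (fun t _ ↦ ?_) (hint (j + 1) (by lia)) (hint j (by lia))).comp tendsto_natCast_atTop_atTop
    rw [iteratedDeriv_succ]
    exact (hf.differentiable_iteratedDeriv j (by norm_cast; lia) t).hasDerivAt
  have integral_tendsto := intervalIntegral_tendsto_integral_Ioi 0
    (show IntegrableOn f (Ioi 0) by simpa using hint 0 (by lia)) tendsto_natCast_atTop_atTop
  have bound_tendsto := intervalIntegral_tendsto_integral_Ioi 0 (hint (J + 1) le_rfl).norm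
    (tendsto_natCast_atTop_atTop (R := ℝ))
  have lhs_tendsto := (hsum.hasSum.tendsto_sum_nat.sub integral_tendsto).sub
    (tendsto_finsetSum (range J) fun j hj ↦
      ((boundary_tendsto j (Finset.mem_range.1 hj)).sub_const (iteratedDeriv j f 0)).const_smul
        (bernoulliFun (j + 1) x / (j + 1).factorial))
  simp only [zero_sub, smul_neg, Finset.sum_neg_distrib, sub_neg_eq_add] at lhs_tendsto
  exact le_of_tendsto_of_tendsto' lhs_tendsto.norm bound_tendsto
    (norm_sum_sub_intervalIntegral_sub_le hf hx)

theorem norm_tsum_mul_sub_integral_Ioi_add_le {J : ℕ} (hf : ContDiff ℝ (J + 1) f)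
    (hint : ∀ j ≤ J + 1, IntegrableOn (iteratedDeriv j f) (Ioi 0)) (hx : x ∈ Icc (0 : ℝ) 1)
    {h : ℝ} (hh : 0 < h) :
    ‖∑' k : ℕ, f (h * (k + x)) - h⁻¹ • (∫ t in Ioi 0, f t) +
        ∑ j ∈ range J, (bernoulliFun (j + 1) x / (j + 1).factorial * h ^ j) •
          iteratedDeriv j f 0‖ ≤
      h ^ J * ∫ t in Ioi 0, ‖iteratedDeriv (J + 1) f t‖ := by
  have iteratedDeriv_scaled (j : ℕ) (hj : j ≤ J + 1) :
      iteratedDeriv j (fun t ↦ f (h * t)) = fun t ↦ h ^ j • iteratedDeriv j f (h * t) :=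
    iteratedDeriv_comp_const_smul (hf.of_le (by exact_mod_cast hj)) h
  have hint_scaled (j : ℕ) (hj : j ≤ J + 1) :
      IntegrableOn (iteratedDeriv j fun t ↦ f (h * t)) (Ioi 0) := by
    rw [iteratedDeriv_scaled j hj]
    refine .smul _ ((integrableOn_Ioi_comp_mul_left_iff _ 0 hh).2 ?_)
    simpa using hint j hj
  have integral_scaled : ∫ t in Ioi 0, ‖iteratedDeriv (J + 1) f (h * t)‖ =
      h⁻¹ * ∫ t in Ioi 0, ‖iteratedDeriv (J + 1) f t‖ := by
    rw [integral_comp_mul_left_Ioi (fun t ↦ ‖iteratedDeriv (J + 1) f t‖) 0 hh, mul_zero,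
      smul_eq_mul]
  have hf_scaled : ContDiff ℝ (J + 1) fun t ↦ f (h * t) :=
    hf.comp (contDiff_const.mul contDiff_id)
  convert! norm_tsum_sub_integral_Ioi_add_le hf_scaled hint_scaled hx using 2
  · rw [integral_comp_mul_left_Ioi f 0 hh, mul_zero]
    congr 1
    refine Finset.sum_congr rfl fun j hj ↦ ?_
    simp only [iteratedDeriv_scaled j (by grind), mul_zero, mul_smul]
  · rw [iteratedDeriv_scaled _ le_rfl]
    simp_rw [norm_smul, norm_pow, Real.norm_of_nonneg hh.le]
    rw [MeasureTheory.integral_const_mul, integral_scaled, pow_succ, mul_assoc,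
      mul_inv_cancel_left₀ hh.ne']

end EulerMaclaurin

section PeriodicWeights

open MeasureTheory Set Filter
open Finset (range)

variable {N : ℕ} [NeZero N] (Φ : ZMod N → ℂ)

lemma val_div_mem_Icc (r : ZMod N) : (r.val / N : ℝ) ∈ Icc (0 : ℝ) 1 :=
  ⟨by positivity, div_le_one_of_le₀ (by exact_mod_cast r.val_lt.le) (by positivity)⟩

theorem zmodLFunction_neg_natCast {k : ℕ} (hk : k ≠ 0) :
    ZMod.LFunction Φ (-k) =
      -(N : ℂ) ^ k / (k + 1) * ∑ r : ZMod N, Φ r * bernoulliFun (k + 1) (r.val / N) := by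
  have hurwitz (r : ZMod N) : HurwitzZeta.hurwitzZeta (ZMod.toAddCircle r) (-k) =
      -1 / (k + 1) * bernoulliFun (k + 1) (r.val / N) := by
    rw [ZMod.toAddCircle_apply, HurwitzZeta.hurwitzZeta_neg_nat hk (val_div_mem_Icc r),
      bernoulliFun, Polynomial.eval_map_algebraMap, Polynomial.eval_map_algebraMap]
    congr 1
    exact Polynomial.aeval_algebraMap_apply ℂ (r.val / N : ℝ) _
  simp_rw [ZMod.LFunction, hurwitz, neg_neg, Complex.cpow_natCast, Finset.mul_sum]
  exact Finset.sum_congr rfl fun r _ ↦ by ring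

variable {Φ} {f : ℝ → ℂ} {J : ℕ}

lemma summable_mul_of_contDiff (hf : ContDiff ℝ 1 f) (hint : IntegrableOn f (Ioi 0))
    (hint' : IntegrableOn (deriv f) (Ioi 0)) {ε : ℝ} (hε : 0 < ε) :
    Summable fun n : ℕ ↦ Φ n * f (ε * n) := by
  have hf_scaled : ContDiff ℝ 1 fun t ↦ f (ε * t) := hf.comp (contDiff_const.mul contDiff_id)
  have hderiv_scaled : deriv (fun t ↦ f (ε * t)) = fun t ↦ ε • deriv f (ε * t) :=
    funext (deriv_comp_mul_left ε f)
  have integrableOn_scaled {g : ℝ → ℂ} (hg : IntegrableOn g (Ioi 0)) :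
      IntegrableOn (fun t ↦ g (ε * t)) (Ioi 0) :=
    (integrableOn_Ioi_comp_mul_left_iff g 0 hε).2 (by rwa [mul_zero])
  have hsum := summable_of_contDiff_of_integrableOn_Ioi hf_scaled (integrableOn_scaled hint)
    (hderiv_scaled ▸ (integrableOn_scaled hint').smul ε) (left_mem_Icc.2 zero_le_one)
  simp only [add_zero] at hsum
  refine .of_norm_bounded (hsum.norm.mul_left (∑ r, ‖Φ r‖)) fun n ↦ ?_
  rw [norm_mul]
  gcongr
  exact Finset.single_le_sum (f := fun r ↦ ‖Φ r‖) (fun r _ ↦ norm_nonneg _)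
    (Finset.mem_univ (n : ZMod N))

lemma tsum_mul_eq_sum_residues {ε : ℝ} (hsum : Summable fun n : ℕ ↦ Φ n * f (ε * n)) :
    ∑' n : ℕ, Φ n * f (ε * n) =
      ∑ r : ZMod N, Φ r * ∑' k : ℕ, f (ε * N * (k + r.val / N)) := by
  have hN : (N : ℝ) ≠ 0 := NeZero.ne _
  rw [Nat.sumByResidueClasses hsum N]
  refine Finset.sum_congr rfl fun r _ ↦ ?_
  rw [← tsum_mul_left]
  refine tsum_congr fun k ↦ ?_
  have harg : ε * ((r.val + N * k : ℕ) : ℝ) = ε * N * (k + r.val / N) := by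
    push_cast
    field_simp
    ring
  rw [harg]
  simp

lemma LFunction_neg_natCast_mul_eq_neg_sum {j : ℕ} {c : ℂ} (hc : j = 0 → c = 0) (ε : ℝ) :
    ZMod.LFunction Φ (-j) * c / j.factorial * ε ^ j =
      -∑ r : ZMod N, Φ r *
        ((bernoulliFun (j + 1) (r.val / N) / (j + 1).factorial * (ε * N) ^ j) • c) := by
  -- For `j = 0` the residue `0` contributes `ζ(0) = -1/2` to the left-hand side instead of
  -- `-B₁(0) = 1/2`, but then `c = 0`.
  rcases eq_or_ne j 0 with rfl | hj
  · simp [hc]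
  · have hj1 : (j + 1 : ℂ) ≠ 0 := by exact_mod_cast j.succ_ne_zero
    rw [zmodLFunction_neg_natCast Φ hj]
    simp only [Finset.mul_sum, Finset.sum_mul, Finset.sum_div, ← Finset.sum_neg_distrib,
      Complex.real_smul]
    refine Finset.sum_congr rfl fun r _ ↦ ?_
    push_cast [Nat.factorial_succ]
    field_simp
    ring

theorem norm_tsum_mul_sub_sum_LFunction_le (hΦ : ∑ r, Φ r = 0) (hf : ContDiff ℝ (J + 1) f)
    (hf0 : f 0 = 0) (hint : ∀ j ≤ J + 1, IntegrableOn (iteratedDeriv j f) (Ioi 0))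
    {ε : ℝ} (hε : 0 < ε) :
    ‖∑' n : ℕ, Φ n * f (ε * n) -
        ∑ j ∈ range J, ZMod.LFunction Φ (-j) * iteratedDeriv j f 0 / j.factorial * ε ^ j‖ ≤
      (N ^ J * (∑ r, ‖Φ r‖) * ∫ t in Ioi 0, ‖iteratedDeriv (J + 1) f t‖) * ε ^ J := by
  have hN : (0 : ℝ) < N := mod_cast NeZero.pos N
  have hsum : Summable fun n : ℕ ↦ Φ n * f (ε * n) :=
    summable_mul_of_contDiff (hf.of_le (by norm_cast; lia)) (by simpa using hint 0 (by lia))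
      (by simpa using hint 1 (by lia)) hε
  have error_eq : ∑' n : ℕ, Φ n * f (ε * n) -
        ∑ j ∈ range J, ZMod.LFunction Φ (-j) * iteratedDeriv j f 0 / j.factorial * ε ^ j =
      ∑ r : ZMod N, Φ r * (∑' k : ℕ, f (ε * N * (k + r.val / N)) -
        (ε * N)⁻¹ • (∫ t in Ioi 0, f t) +
        ∑ j ∈ range J, (bernoulliFun (j + 1) (r.val / N) / (j + 1).factorial * (ε * N) ^ j) •
          iteratedDeriv j f 0) := by
    have coefficient (j : ℕ) := LFunction_neg_natCast_mul_eq_neg_sum (Φ := Φ) (j := j)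
      (c := iteratedDeriv j f 0) (by rintro rfl; simpa using hf0) ε
    simp_rw [tsum_mul_eq_sum_residues hsum, coefficient, mul_add, mul_sub,
      Finset.sum_add_distrib, Finset.sum_sub_distrib, ← Finset.sum_mul, hΦ, zero_mul, sub_zero,
      Finset.sum_neg_distrib, sub_neg_eq_add, Finset.mul_sum]
    rw [Finset.sum_comm (s := range J)]
  rw [error_eq]
  calc _ ≤ ∑ r : ZMod N, ‖Φ r‖ * ((ε * N) ^ J * ∫ t in Ioi 0, ‖iteratedDeriv (J + 1) f t‖) :=
        norm_sum_le_of_le _ fun r _ ↦ by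
          rw [norm_mul]
          gcongr
          exact norm_tsum_mul_sub_integral_Ioi_add_le hf hint (val_div_mem_Icc r) (mul_pos hε hN)
    _ = _ := by rw [← Finset.sum_mul]; ring

end PeriodicWeights

section Gaussian

open MeasureTheory Set Filter Polynomial

/-- The odd Gaussian `x ↦ x e^{-x²/2}`, the test function turning weighted sums into half-derivative
theta series. It is complex-valued so that it can be multiplied by complex weights. -/
noncomputable def oddGaussian (x : ℝ) : ℂ :=
  (x * Real.exp (-(x ^ 2 / 2)) : ℝ)

lemma iteratedDeriv_ofReal_comp {j : ℕ} {f : ℝ → ℝ} (hf : ContDiff ℝ j f) (x : ℝ) :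
    iteratedDeriv j (fun y ↦ (f y : ℂ)) x = iteratedDeriv j f x := by
  have h := Complex.ofRealCLM.iteratedFDeriv_comp_left hf.contDiffAt (x := x) le_rfl
  exact DFunLike.congr_fun h fun _ ↦ 1

lemma iteratedDeriv_oddGaussian (j : ℕ) (x : ℝ) : iteratedDeriv j oddGaussian x =
    ((-1) ^ j * aeval x (hermite (j + 1)) * Real.exp (-(x ^ 2 / 2)) : ℝ) := by
  have oddGaussian_eq : oddGaussian =
      fun x ↦ ((-deriv (fun y ↦ Real.exp (-(y ^ 2 / 2))) x : ℝ) : ℂ) := by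
    ext y
    rw [oddGaussian, ← Function.iterate_one deriv, deriv_gaussian_eq_hermite_mul_gaussian]
    simp
  have hf : ContDiff ℝ (j + 1) fun y : ℝ ↦ Real.exp (-(y ^ 2 / 2)) := by fun_prop
  rw [oddGaussian_eq, iteratedDeriv_ofReal_comp (contDiff_succ_iff_deriv.1 hf).2.2.neg,
    iteratedDeriv_fun_neg, ← iteratedDeriv_succ', iteratedDeriv_eq_iterate,
    deriv_gaussian_eq_hermite_mul_gaussian, pow_succ]
  congr 1
  ring

lemma contDiff_oddGaussian {n : ℕ∞} : ContDiff ℝ n oddGaussian :=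
  Complex.ofRealCLM.contDiff.comp
    (show ContDiff ℝ n fun x : ℝ ↦ x * Real.exp (-(x ^ 2 / 2)) by fun_prop)

lemma integrable_aeval_mul_exp_neg_sq_div_two (p : ℤ[X]) :
    Integrable fun x : ℝ ↦ aeval x p * Real.exp (-(x ^ 2 / 2)) := by
  induction p using Polynomial.induction_on' with
  | add p q hp hq =>
    simp only [map_add, add_mul]
    exact hp.add hq
  | monomial n c =>
    have hn : (-1 : ℝ) < n := by linarith [n.cast_nonneg (α := ℝ)]
    have := (integrable_rpow_mul_exp_neg_mul_sq (half_pos one_pos) hn).const_mul (c : ℝ)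
    refine this.congr (.of_forall fun x ↦ ?_)
    simp [aeval_monomial, mul_assoc, div_eq_inv_mul]

lemma integrable_iteratedDeriv_oddGaussian (j : ℕ) : Integrable (iteratedDeriv j oddGaussian) := by
  simp_rw [funext (iteratedDeriv_oddGaussian j), mul_assoc]
  exact ((integrable_aeval_mul_exp_neg_sq_div_two _).const_mul _).ofReal

lemma iteratedDeriv_oddGaussian_zero (j : ℕ) :
    iteratedDeriv j oddGaussian 0 = (-1) ^ j * ((hermite (j + 1)).coeff 0 : ℂ) := by
  rw [iteratedDeriv_oddGaussian, aeval_def, ← eval_map, ← coeff_zero_eq_eval_zero, coeff_map]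
  simp

lemma iteratedDeriv_two_mul_oddGaussian_zero (k : ℕ) :
    iteratedDeriv (2 * k) oddGaussian 0 = 0 := by
  rw [iteratedDeriv_oddGaussian_zero, coeff_hermite_of_odd_add (by simp)]
  simp

lemma iteratedDeriv_two_mul_add_one_oddGaussian_zero_div_factorial (k : ℕ) :
    iteratedDeriv (2 * k + 1) oddGaussian 0 / (2 * k + 1).factorial =
      (-1) ^ k / (2 ^ k * k.factorial) := by
  have hcoeff := coeff_hermite_explicit (k + 1) 0
  rw [iteratedDeriv_oddGaussian_zero, show 2 * k + 1 + 1 = 2 * (k + 1) + 0 by ring, hcoeff]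
  have : ((2 * k + 1).doubleFactorial : ℂ) ≠ 0 := by exact_mod_cast (Nat.doubleFactorial_pos _).ne'
  rw [Nat.factorial_eq_mul_doubleFactorial, Nat.doubleFactorial_two_mul,
    show 2 * (k + 1) - 1 = 2 * k + 1 by lia]
  push_cast
  simp only [pow_succ, pow_mul]
  field_simp
  simp

end Gaussian

section Theta

open Asymptotics Set Filter
open Finset (range)

lemma sum_range_two_mul_add_one_of_even_eq_zero {M : Type*} [AddCommMonoid M] {f : ℕ → M}
    (hf : ∀ k, f (2 * k) = 0) (K : ℕ) :
    ∑ j ∈ range (2 * K + 1), f j = ∑ k ∈ range K, f (2 * k + 1) := by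
  induction K with
  | zero => simpa using hf 0
  | succ K ih =>
    rw [Finset.sum_range_succ _ K, ← ih, show 2 * (K + 1) + 1 = 2 * K + 1 + 1 + 1 by ring,
      Finset.sum_range_succ, Finset.sum_range_succ, show 2 * K + 1 + 1 = 2 * (K + 1) by ring, hf,
      add_zero]

variable {N : ℕ} [NeZero N] (Φ : ZMod N → ℂ)

omit [NeZero N] in
lemma tsum_mul_oddGaussian (ε : ℝ) :
    ∑' n : ℕ, Φ n * oddGaussian (ε * n) =
      ε * ∑' n : ℕ, n * Φ n * Complex.exp (-(ε ^ 2 / 2 : ℝ) * n ^ 2) := by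
  rw [← tsum_mul_left]
  refine tsum_congr fun n ↦ ?_
  have hexp : (-((ε * n) ^ 2 / 2) : ℂ) = -(ε ^ 2 / 2) * n ^ 2 := by ring
  rw [oddGaussian]
  push_cast
  rw [hexp]
  ring

lemma sum_mul_iteratedDeriv_oddGaussian_zero (l : ℕ → ℂ) (ε : ℝ) (K : ℕ) :
    ∑ j ∈ range (2 * K + 1), l j * iteratedDeriv j oddGaussian 0 / j.factorial * ε ^ j =
      ε * ∑ k ∈ range K, (-1) ^ k * l (2 * k + 1) / k.factorial * (ε ^ 2 / 2 : ℝ) ^ k := by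
  rw [sum_range_two_mul_add_one_of_even_eq_zero
    (fun k ↦ by simp [iteratedDeriv_two_mul_oddGaussian_zero]), Finset.mul_sum]
  refine Finset.sum_congr rfl fun k _ ↦ ?_
  rw [mul_div_assoc, iteratedDeriv_two_mul_add_one_oddGaussian_zero_div_factorial]
  push_cast
  rw [div_pow]
  field_simp
  ring

variable {Φ}

theorem tsum_mul_exp_sub_sum_LFunction_isBigO (hΦ : ∑ r, Φ r = 0) (K : ℕ) :
    (fun u : ℝ ↦ ∑' n : ℕ, n * Φ n * Complex.exp (-u * n ^ 2) -
        ∑ k ∈ range K, (-1) ^ k * ZMod.LFunction Φ (-(2 * k + 1 : ℕ)) / k.factorial * u ^ k)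
      =O[𝓟 (Ioi 0)] fun u ↦ u ^ K := by
  set C : ℝ := N ^ (2 * K + 1) * (∑ r, ‖Φ r‖) *
    ∫ t in Ioi 0, ‖iteratedDeriv (2 * K + 2) oddGaussian t‖
  refine isBigO_principal.2 ⟨C * 2 ^ K, fun u (hu : 0 < u) ↦ ?_⟩
  obtain ⟨ε, hε, rfl⟩ : ∃ ε > 0, u = ε ^ 2 / 2 :=
    ⟨√(2 * u), by positivity, by rw [Real.sq_sqrt (by positivity)]; ring⟩
  refine le_of_mul_le_mul_left ?_ hε
  have hbound := norm_tsum_mul_sub_sum_LFunction_le hΦ (J := 2 * K + 1)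
    contDiff_oddGaussian (by simp [oddGaussian])
    (fun j _ ↦ (integrable_iteratedDeriv_oddGaussian j).integrableOn) hε
  rw [tsum_mul_oddGaussian, sum_mul_iteratedDeriv_oddGaussian_zero fun j ↦ ZMod.LFunction Φ (-j),
    ← mul_sub, norm_mul, Complex.norm_real, Real.norm_of_nonneg hε.le] at hbound
  refine hbound.trans_eq (show C * ε ^ (2 * K + 1) = _ from ?_)
  rw [norm_pow, Real.norm_of_nonneg hu.le, div_pow]
  field_simp
  ring

end Theta

section ShiftedTheta

open Asymptotics Set Filter
open Finset (range)

lemma tsum_succ_mul_exp_sub_sq (c : ℕ → ℂ) (t w D : ℂ) :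
    ∑' n : ℕ, ((n : ℂ) + 1) * c (n + 1) * Complex.exp (-t * (((n : ℂ) + 1) ^ 2 - w ^ 2) / D) =
      Complex.exp (w ^ 2 * t / D) * ∑' n : ℕ, n * c n * Complex.exp (-(t / D) * n ^ 2) := by
  have support_subset : (Function.support fun n : ℕ ↦ n * c n * Complex.exp (-(t / D) * n ^ 2)) ⊆
      range Nat.succ := by
    rintro (_ | n) hn
    · simp at hn
    · exact ⟨n, rfl⟩
  rw [← Nat.succ_injective.tsum_eq support_subset, ← tsum_mul_left]
  refine tsum_congr fun n ↦ ?_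
  rw [mul_left_comm, ← Complex.exp_add]
  push_cast
  congr 2
  ring

variable {N : ℕ} [NeZero N] {Φ : ZMod N → ℂ}

theorem tsum_succ_mul_exp_sub_sq_sub_sum_LFunction_isBigO (hΦ : ∑ r, Φ r = 0) {D : ℝ} (hD : 0 < D)
    (w : ℂ) (K : ℕ) :
    (fun t : ℝ ↦
        (-(1 / 2) : ℂ) * ∑' n : ℕ, ((n : ℂ) + 1) * Φ (n + 1 : ℕ) *
            Complex.exp (-(t : ℂ) * (((n : ℂ) + 1) ^ 2 - w ^ 2) / D)
          - Complex.exp (w ^ 2 * t / D) *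
            ∑ n ∈ range K,
              ((1 / 2 : ℂ) * (-1) ^ (n + 1) * ZMod.LFunction Φ (-2 * (n : ℂ) - 1)) /
                (n.factorial : ℂ) * ((t : ℂ) / D) ^ n)
      =O[𝓝[>] (0 : ℝ)] fun t : ℝ ↦ t ^ K := by
  have scale_tendsto : Tendsto (fun t : ℝ ↦ t / D) (𝓝[>] 0) (𝓟 (Ioi 0)) :=
    tendsto_principal.2 (eventually_mem_nhdsWithin.mono fun t ht ↦ div_pos ht hD)
  have theta_isBigO := (tsum_mul_exp_sub_sum_LFunction_isBigO hΦ K).comp_tendsto scale_tendsto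
  have pow_isBigO : (fun t : ℝ ↦ (t / D) ^ K) =O[𝓝[>] 0] fun t ↦ t ^ K := by
    simp_rw [div_pow, div_eq_mul_inv, mul_comm _ (D ^ K)⁻¹]
    exact isBigO_const_mul_self _ _ _
  have exp_isBigO : (fun t : ℝ ↦ -(1 / 2) * Complex.exp (w ^ 2 * t / D))
      =O[𝓝[>] 0] fun _ ↦ (1 : ℝ) := by
    refine Tendsto.isBigO_one ℝ (Continuous.tendsto ?_ 0 |>.mono_left nhdsWithin_le_nhds)
    fun_prop
  refine (exp_isBigO.mul (theta_isBigO.trans pow_isBigO)).congr (fun t ↦ ?_) fun t ↦ one_mul _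
  rw [tsum_succ_mul_exp_sub_sq (fun n ↦ Φ n)]
  simp only [Function.comp_apply, mul_sub, Finset.mul_sum, Complex.ofReal_div]
  congr 1
  · ring
  · refine Finset.sum_congr rfl fun k _ ↦ ?_
    rw [show (-((2 * k + 1 : ℕ) : ℂ)) = -2 * k - 1 by push_cast; ring, pow_succ]
    ring

end ShiftedTheta

section LFunction

open Set Filter

variable {N : ℕ} [NeZero N] {Φ : ZMod N → ℂ}

theorem eq_zmodLFunction_of_hasSum (hΦ : ∑ r, Φ r = 0) {L : ℂ → ℂ} (hL : Differentiable ℂ L)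
    (hseries : ∀ s : ℂ, 1 < s.re → HasSum (fun n : ℕ ↦ Φ (n + 1 : ℕ) / ((n : ℂ) + 1) ^ s) (L s)) :
    L = ZMod.LFunction Φ := by
  have eq_of_one_lt_re : ∀ s : ℂ, 1 < s.re → L s = ZMod.LFunction Φ s := by
    intro s hs
    rw [ZMod.LFunction_eq_LSeries Φ hs, LSeries,
      (ZMod.LSeriesSummable_of_one_lt_re Φ hs).tsum_eq_zero_add, LSeries.term_zero, zero_add,
      ← (hseries s hs).tsum_eq]
    exact tsum_congr fun n ↦ by simp
  have analytic {g : ℂ → ℂ} (hg : Differentiable ℂ g) : AnalyticOnNhd ℂ g univ :=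
    hg.differentiableOn.analyticOnNhd isOpen_univ
  refine (analytic hL).eq_of_eventuallyEq
    (analytic (ZMod.differentiable_LFunction_of_sum_zero hΦ)) (z₀ := 2) ?_
  filter_upwards [(isOpen_lt continuous_const Complex.continuous_re).mem_nhds
    (show (1 : ℝ) < (2 : ℂ).re by norm_num)] with s hs using eq_of_one_lt_re s hs

end LFunction

section Chi

/-- The weight `χ_{8m+4}^{(a)}` as a complex-valued function on residues modulo `8m+4`, the form in
which it has an `L`-function in Mathlib. -/
def chiZMod (m a : ℕ) (r : ZMod (8 * m + 4)) : ℂ :=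
  chiGen m a r.val

lemma chiZMod_natCast (m a n : ℕ) : chiZMod m a n = chiGen m a n := by
  simp [chiZMod, chiGen, ZMod.val_natCast]

lemma chiGen_add_half_period {m a n : ℕ} (ha : a < m) (hn : n < 8 * m + 4) :
    chiGen m a (n + (4 * m + 2)) = -chiGen m a n := by
  have hmod : (n + (4 * m + 2)) % (8 * m + 4) =
      if n < 4 * m + 2 then n + (4 * m + 2) else n - (4 * m + 2) := by
    split_ifs with h
    · exact Nat.mod_eq_of_lt (by lia)
    · rw [Nat.mod_eq_sub_mod (by lia), Nat.mod_eq_of_lt (by lia)]; lia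
  rw [chiGen, chiGen, hmod, Nat.mod_eq_of_lt hn,
    Nat.mod_eq_of_lt (a := 2 * m - 2 * a - 1) (by lia),
    Nat.mod_eq_of_lt (a := 6 * m + 2 * a + 5) (by lia),
    Nat.mod_eq_of_lt (a := 2 * m + 2 * a + 3) (by lia),
    Nat.mod_eq_of_lt (a := 6 * m - 2 * a + 1) (by lia)]
  grind

lemma sum_chiZMod {m a : ℕ} (ha : a < m) : ∑ r, chiZMod m a r = 0 := by
  have antiperiodic (r : ZMod (8 * m + 4)) :
      chiZMod m a (r + (4 * m + 2 : ℕ)) = -chiZMod m a r := by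
    obtain ⟨n, hn, rfl⟩ : ∃ n < 8 * m + 4, (n : ZMod (8 * m + 4)) = r :=
      ⟨r.val, r.val_lt, r.natCast_zmod_val⟩
    rw [← Nat.cast_add, chiZMod_natCast, chiZMod_natCast, chiGen_add_half_period ha hn]
    simp
  rw [← self_eq_neg, ← Finset.sum_neg_distrib]
  simp_rw [← antiperiodic]
  exact (Equiv.sum_comp (Equiv.addRight _) _).symm

end Chi

theorem stmt_7 (m a : ℕ) (hm : 1 ≤ m) (ha : a < m)
    (L : ℂ → ℂ) (hL : Differentiable ℂ L)
    (hLseries : ∀ s : ℂ, 1 < s.re →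
      HasSum (fun n : ℕ => (chiGen m a (n + 1) : ℂ) / ((n : ℂ) + 1) ^ s) (L s))
    (K : ℕ) :
    (fun t : ℝ =>
        (-(1 / 2) : ℂ) * ∑' n : ℕ, ((n : ℂ) + 1) * (chiGen m a (n + 1) : ℂ) *
            Complex.exp (-(t : ℂ) * (((n : ℂ) + 1) ^ 2 - (2 * (m : ℂ) - 2 * a - 1) ^ 2) /
              (8 * (2 * (m : ℂ) + 1)))
          - Complex.exp ((2 * (m : ℂ) - 2 * a - 1) ^ 2 * (t : ℂ) / (8 * (2 * (m : ℂ) + 1))) *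
            ∑ n ∈ Finset.range K,
              ((1 / 2 : ℂ) * (-1) ^ (n + 1) * L (-2 * (n : ℂ) - 1)) / (n.factorial : ℂ) *
                ((t : ℂ) / (8 * (2 * (m : ℂ) + 1))) ^ n)
      =O[𝓝[>] (0 : ℝ)] fun t : ℝ => t ^ K := by
  have hΦ : ∑ r, chiZMod m a r = 0 := sum_chiZMod ha
  obtain rfl : L = ZMod.LFunction (chiZMod m a) :=
    eq_zmodLFunction_of_hasSum hΦ hL (by simpa only [chiZMod_natCast] using hLseries)
  have hD : (0 : ℝ) < 8 * (2 * m + 1) := by positivity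
  have expansion :=
    tsum_succ_mul_exp_sub_sq_sub_sum_LFunction_isBigO hΦ hD (2 * m - 2 * a - 1) K
  simp only [chiZMod_natCast] at expansion
  simpa using expansion
end
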